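/- On the region R(1): uniformly on every compact subset K of the interior of R(1), ln|F_n(z)|/(2√n) → Re(√(Li₂(z))) as n → ∞; that is, sup_{z ∈ K} | ln|F_n(z)|/(2√n) − Re(√(Li₂(z))) | → 0. -/

import Mathlib

open Complex Filter

/-- `partsCount k n` is the number of partitions of `n` with exactly `k` parts. -/
noncomputable def partsCount (k n : ℕ) : ℕ := Nat.card {p : Nat.Partition n // p.parts.card = k}

/-- The partition polynomial `F_n(x) = ∑_{k=1}^n p_k(n) x^k`. -/
noncomputable def F (n : ℕ) (x : ℂ) : ℂ := ∑ k ∈ Finset.Icc 1 n, (partsCount k n : ℂ) * x ^ k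

/-- The dilogarithm `Li₂(z) = ∑_{n=1}^∞ zⁿ/n²`. -/
noncomputable def dilog (z : ℂ) : ℂ := ∑' n : ℕ, z ^ (n + 1) / ((n : ℂ) + 1) ^ 2

/-- `fk k x = (1/k)·Re √(Li₂(x^k))` with the principal branch square root. -/
noncomputable def fk (k : ℕ) (x : ℂ) : ℝ := (1 / (k : ℝ)) * ((dilog (x ^ k)) ^ (1 / 2 : ℂ)).re

/-- The region `R(1)`. -/
def R1 : Set ℂ := {x | ‖x‖ < 1 ∧ fk 2 x ≤ fk 1 x ∧ fk 3 x ≤ fk 1 x}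

/-- The region `R(2)`. -/
def R2 : Set ℂ := {x | ‖x‖ < 1 ∧ fk 1 x ≤ fk 2 x ∧ fk 3 x ≤ fk 2 x}

/-- The region `R(3)`. -/
def R3 : Set ℂ := {x | ‖x‖ < 1 ∧ fk 1 x ≤ fk 3 x ∧ fk 2 x ≤ fk 3 x}

section
open Complex Filter MeasureTheory Topology

lemma dl_summ : Summable (fun n : ℕ => 1 / ((n : ℝ) + 1) ^ 2) := by
  have := (summable_nat_add_iff 1).2 (Real.summable_one_div_nat_pow.2 (by norm_num : 1 < 2))
  simpa using this

lemma dl_tsum : ∑' n : ℕ, 1 / ((n : ℝ) + 1) ^ 2 = Real.pi ^ 2 / 6 := by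
  have h := hasSum_zeta_two
  have h2 := (hasSum_nat_add_iff' 1).2 h
  simpa using h2.tsum_eq

lemma dl_norm_term (z : ℂ) (n : ℕ) :
    ‖z ^ (n + 1) / ((n : ℂ) + 1) ^ 2‖ = ‖z‖ ^ (n + 1) * (1 / ((n : ℝ) + 1) ^ 2) := by
  have : ‖((n : ℂ) + 1)‖ = (n : ℝ) + 1 := by
    rw [← Nat.cast_succ, Complex.norm_natCast]; push_cast; rfl
  rw [norm_div, norm_pow, norm_pow, this]; ring

lemma dl_term_le {z : ℂ} (hz : ‖z‖ ≤ 1) (n : ℕ) :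
    ‖z ^ (n + 1) / ((n : ℂ) + 1) ^ 2‖ ≤ ‖z‖ * (1 / ((n : ℝ) + 1) ^ 2) := by
  rw [dl_norm_term]
  gcongr
  exact pow_le_of_le_one (norm_nonneg _) hz (by omega)

lemma dl_hasSum {z : ℂ} (hz : ‖z‖ ≤ 1) :
    HasSum (fun n : ℕ => z ^ (n + 1) / ((n : ℂ) + 1) ^ 2) (dilog z) := by
  refine (Summable.of_norm_bounded (g := fun n : ℕ => ‖z‖ * (1 / ((n : ℝ) + 1) ^ 2)) (dl_summ.mul_left _) ?_).hasSum
  exact dl_term_le hz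

lemma dl_norm_le {z : ℂ} (hz : ‖z‖ ≤ 1) : ‖dilog z‖ ≤ ‖z‖ * (Real.pi ^ 2 / 6) := by
  rw [← dl_tsum, ← tsum_mul_left]
  exact tsum_of_norm_bounded (dl_summ.mul_left _).hasSum (dl_term_le hz)

lemma dl_diff : DifferentiableOn ℂ dilog (Metric.ball 0 1) := by
  refine Complex.differentiableOn_tsum_of_summable_norm (u := fun n : ℕ => 1 / ((n : ℝ) + 1) ^ 2)
    dl_summ (fun n => by fun_prop) Metric.isOpen_ball (fun n z hz => ?_)
  have hz : ‖z‖ < 1 := by simpa using hz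
  refine (dl_term_le hz.le n).trans ?_
  have : 0 ≤ 1 / ((n : ℝ) + 1) ^ 2 := by positivity
  nlinarith

lemma dl_analytic : AnalyticOnNhd ℂ dilog (Metric.ball 0 1) :=
  dl_diff.analyticOnNhd Metric.isOpen_ball

lemma dl_zero : dilog 0 = 0 := by simp [dilog]

/-- square root facts -/
lemma sq_half (w : ℂ) : (w ^ (1 / 2 : ℂ)) ^ 2 = w := by
  have := Complex.cpow_nat_inv_pow w (n := 2) (by norm_num)
  simpa using this

lemma re_half_nonneg (w : ℂ) : 0 ≤ (w ^ (1 / 2 : ℂ)).re := by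
  by_cases hw : w = 0
  · simp [hw]
  rw [Complex.cpow_def_of_ne_zero hw, Complex.exp_re]
  apply mul_nonneg (Real.exp_pos _).le
  apply Real.cos_nonneg_of_mem_Icc
  have h1 := Complex.neg_pi_lt_arg w
  have h2 := Complex.arg_le_pi w
  have : (Complex.log w * (1 / 2)).im = w.arg / 2 := by
    rw [show (1/2 : ℂ) = ((1/2 : ℝ) : ℂ) by push_cast; rfl, Complex.im_mul_ofReal, Complex.log_im]; ring
  rw [this]
  constructor <;> linarith

lemma re_half_sq (w : ℂ) : ((w ^ (1 / 2 : ℂ)).re) ^ 2 = (‖w‖ + w.re) / 2 := by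
  set u := w ^ (1 / 2 : ℂ)
  have h : u ^ 2 = w := sq_half w
  have h1 : ‖w‖ = u.re ^ 2 + u.im ^ 2 := by
    rw [← h, norm_pow, ← Complex.normSq_eq_norm_sq, Complex.normSq_apply]; ring
  have h2 : w.re = u.re ^ 2 - u.im ^ 2 := by
    rw [← h, pow_two, Complex.mul_re]; ring
  rw [h1, h2]; ring

lemma fk_nonneg (k : ℕ) (x : ℂ) : 0 ≤ fk k x :=
  mul_nonneg (by positivity) (re_half_nonneg _)

lemma fk_sq (k : ℕ) (x : ℂ) :
    (fk k x) ^ 2 = (‖dilog (x ^ k)‖ + (dilog (x ^ k)).re) / (2 * k ^ 2) := by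
  rw [fk, mul_pow, re_half_sq, one_div, inv_pow, ← div_eq_inv_mul, div_div]

/-- maximum of `Re (w / (1+it))`. -/
lemma re_div_le (w : ℂ) (t : ℝ) : (w / (1 + t * I)).re ≤ (‖w‖ + w.re) / 2 := by
  have hn : w.re ^ 2 + w.im ^ 2 = ‖w‖ ^ 2 := by
    rw [← Complex.normSq_eq_norm_sq, Complex.normSq_apply]; ring
  have : (w / (1 + t * I)).re = (w.re + t * w.im) / (1 + t ^ 2) := by
    rw [Complex.div_re]
    simp [Complex.normSq_apply]
    field_simp
    
  rw [this, div_le_iff₀ (by positivity)]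
  have h0 := norm_nonneg w
  have key : 0 ≤ (‖w‖ - w.re) + (‖w‖ + w.re) * t ^ 2 - 2 * t * w.im := by
    have ha : 0 ≤ ‖w‖ - w.re := by linarith [Complex.re_le_norm w]
    have hb : 0 ≤ ‖w‖ + w.re := by linarith [Complex.abs_re_le_norm w, neg_abs_le w.re]
    have hab : (‖w‖ - w.re) * (‖w‖ + w.re) = w.im ^ 2 := by nlinarith
    rcases hb.eq_or_lt with hb0 | hb0
    · have : w.im = 0 := by
        rw [← hb0] at hab; simpa using hab.symm
      rw [← hb0, this]; simpa using ha
    · have : 0 ≤ (‖w‖ + w.re) * ((‖w‖ - w.re) + (‖w‖ + w.re) * t ^ 2 - 2 * t * w.im) := by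
        nlinarith [sq_nonneg ((‖w‖ + w.re) * t - w.im)]
      exact nonneg_of_mul_nonneg_right this hb0
  nlinarith

end

section
open Complex Filter MeasureTheory Topology

lemma li_int (n : ℕ) : ∫ s in Set.Ioi (0:ℝ), s * Real.exp (-s) ^ (n + 1) = 1 / ((n : ℝ) + 1) ^ 2 := by
  have h := Real.integral_rpow_mul_exp_neg_mul_Ioi (a := 2) (r := (n : ℝ) + 1) (by norm_num) (by positivity)
  have h2 : Real.Gamma 2 = 1 := by simpa using Real.Gamma_nat_eq_factorial 1
  rw [h2, mul_one] at h
  have h3 : (1 / ((n : ℝ) + 1)) ^ (2 : ℝ) = 1 / ((n : ℝ) + 1) ^ 2 := by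
    rw [Real.rpow_two, div_pow, one_pow]
  rw [← h3, ← h]
  apply setIntegral_congr_fun measurableSet_Ioi
  intro s hs
  simp only []
  rw [show (2 : ℝ) - 1 = 1 by norm_num, Real.rpow_one, ← Real.exp_nat_mul]
  congr 2; push_cast; ring

lemma li_integrable (n : ℕ) :
    Integrable (fun s : ℝ => s * Real.exp (-s) ^ (n + 1)) (volume.restrict (Set.Ioi 0)) := by
  by_contra h
  have h1 := integral_undef h
  rw [li_int] at h1
  have : (0:ℝ) < 1 / ((n : ℝ) + 1) ^ 2 := by positivity
  linarith

lemma one_sub_ne {x : ℂ} (hx : ‖x‖ < 1) {s : ℝ} (hs : 0 < s) : ‖x * (Real.exp (-s) : ℂ)‖ < 1 := by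
  rw [norm_mul, Complex.norm_real, Real.norm_of_nonneg (Real.exp_pos _).le]
  have : Real.exp (-s) ≤ 1 := Real.exp_le_one_iff.2 (by linarith)
  nlinarith [norm_nonneg x, Real.exp_pos (-s)]

lemma dl_integral {x : ℂ} (hx : ‖x‖ < 1) :
    Integrable (fun s : ℝ => ((s * Real.exp (-s) : ℝ) : ℂ) * (x / (1 - x * (Real.exp (-s) : ℝ))))
      (volume.restrict (Set.Ioi 0)) ∧
    dilog x = ∫ s in Set.Ioi (0:ℝ), ((s * Real.exp (-s) : ℝ) : ℂ) * (x / (1 - x * (Real.exp (-s) : ℝ))) := by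
  constructor
  · have h0 := (li_integrable 0).ofReal (𝕜 := ℂ)
    simp only [zero_add, pow_one] at h0
    refine h0.mul_bdd (c := 1 / (1 - ‖x‖)) ?_ ?_
    · refine Measurable.aestronglyMeasurable ?_
      fun_prop
    · refine (ae_restrict_iff' measurableSet_Ioi).2 (Eventually.of_forall fun s hs => ?_)
      have h1 : ‖x * (Real.exp (-s) : ℂ)‖ ≤ ‖x‖ := by
        rw [norm_mul, Complex.norm_real, Real.norm_of_nonneg (Real.exp_pos _).le]
        have : Real.exp (-s) ≤ 1 := Real.exp_le_one_iff.2 (by simpa using (le_of_lt hs))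
        nlinarith [norm_nonneg x]
      have h2 : 1 - ‖x‖ ≤ ‖1 - x * (Real.exp (-s) : ℂ)‖ := by
        have := norm_sub_norm_le (1 : ℂ) (x * (Real.exp (-s) : ℂ))
        rw [norm_one] at this
        linarith
      rw [norm_div]
      exact div_le_div₀ zero_le_one hx.le (by linarith) h2
  · have key := hasSum_integral_of_summable_integral_norm (μ := volume.restrict (Set.Ioi (0:ℝ)))
      (F := fun (n : ℕ) (s : ℝ) => x ^ (n + 1) * ((s * Real.exp (-s) ^ (n + 1) : ℝ) : ℂ))
      (fun n => ((li_integrable n).ofReal (𝕜 := ℂ)).const_mul _) ?_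
    · have e1 : ∀ n : ℕ, ∫ s in Set.Ioi (0:ℝ), x ^ (n + 1) * ((s * Real.exp (-s) ^ (n + 1) : ℝ) : ℂ)
          = x ^ (n + 1) / ((n : ℂ) + 1) ^ 2 := by
        intro n
        rw [integral_const_mul, integral_complex_ofReal, li_int]
        push_cast; ring
      simp only [e1] at key
      rw [(dl_hasSum hx.le).unique key]
      apply setIntegral_congr_fun measurableSet_Ioi
      intro s hs
      simp only []
      have hlt := one_sub_ne hx hs
      have h1 := (hasSum_geometric_of_norm_lt_one hlt).mul_left (x * (s * Real.exp (-s) : ℝ))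
      refine HasSum.tsum_eq ?_
      have e2 : x * ((s * Real.exp (-s) : ℝ) : ℂ) * (1 - x * ((Real.exp (-s) : ℝ) : ℂ))⁻¹
          = ((s * Real.exp (-s) : ℝ) : ℂ) * (x / (1 - x * ((Real.exp (-s) : ℝ) : ℂ))) := by
        rw [div_eq_mul_inv]; ring
      rw [← e2]
      refine h1.congr_fun ?_
      intro n; push_cast; ring
    · have : ∀ n : ℕ, ∫ s in Set.Ioi (0:ℝ), ‖x ^ (n + 1) * ((s * Real.exp (-s) ^ (n + 1) : ℝ) : ℂ)‖
          = ‖x‖ ^ (n + 1) * (1 / ((n : ℝ) + 1) ^ 2) := by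
        intro n
        rw [← li_int, ← integral_const_mul]
        apply setIntegral_congr_fun measurableSet_Ioi
        intro s hs
        simp only []
        rw [norm_mul, norm_pow, Complex.norm_real, Real.norm_of_nonneg]
        have : 0 < s := hs
        positivity
      simp only [this]
      refine Summable.of_nonneg_of_le (fun n => by positivity) (fun n => ?_) dl_summ
      have : ‖x‖ ^ (n + 1) ≤ 1 := pow_le_one₀ (norm_nonneg _) hx.le
      have h2 : 0 ≤ 1 / ((n : ℝ) + 1) ^ 2 := by positivity
      nlinarith

lemma nsq {x : ℂ} : x.re ^ 2 + x.im ^ 2 = ‖x‖ ^ 2 := by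
  rw [← Complex.normSq_eq_norm_sq, Complex.normSq_apply]; ring

lemma nsq_one_sub (x : ℂ) (t : ℝ) : Complex.normSq (1 - x * (t : ℂ)) = 1 - 2 * t * x.re + t ^ 2 * ‖x‖ ^ 2 := by
  rw [Complex.normSq_apply, ← nsq]; simp; ring

lemma re_kernel (x : ℂ) (t : ℝ) : (x / (1 - x * (t:ℂ))).re
    = (x.re - t * ‖x‖ ^ 2) / (1 - 2 * t * x.re + t ^ 2 * ‖x‖ ^ 2) := by
  rw [Complex.div_re, nsq_one_sub, ← add_div, ← nsq]
  congr 1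
  simp; ring

lemma im_kernel (x : ℂ) (t : ℝ) : (x / (1 - x * (t:ℂ))).im
    = x.im / (1 - 2 * t * x.re + t ^ 2 * ‖x‖ ^ 2) := by
  rw [Complex.div_im, nsq_one_sub, ← sub_div]
  congr 1
  simp; ring

lemma den_pos {x : ℂ} (hx : ‖x‖ < 1) {t : ℝ} (ht : 0 < t) (ht1 : t ≤ 1) :
    0 < 1 - 2 * t * x.re + t ^ 2 * ‖x‖ ^ 2 := by
  have h := Complex.re_le_norm x
  have : 0 < (1 - t * ‖x‖) ^ 2 := by
    have : 0 < 1 - t * ‖x‖ := by nlinarith [norm_nonneg x]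
    positivity
  nlinarith

lemma dl_re_integral {x : ℂ} (hx : ‖x‖ < 1) (c : ℂ) :
    Integrable (fun s : ℝ => (s * Real.exp (-s)) * (c * (x / (1 - x * (Real.exp (-s) : ℝ)))).re)
      (volume.restrict (Set.Ioi 0)) ∧
    (c * dilog x).re = ∫ s in Set.Ioi (0:ℝ), (s * Real.exp (-s)) * (c * (x / (1 - x * (Real.exp (-s) : ℝ)))).re := by
  obtain ⟨h1, h2⟩ := dl_integral hx
  have h3 := h1.const_mul c
  have e : ∀ s : ℝ, (c * (((s * Real.exp (-s) : ℝ) : ℂ) * (x / (1 - x * (Real.exp (-s) : ℝ))))).re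
     = (s * Real.exp (-s)) * (c * (x / (1 - x * (Real.exp (-s) : ℝ)))).re := by
    intro s
    rw [mul_left_comm, Complex.re_ofReal_mul]
  constructor
  · have := h3.re
    refine this.congr (Eventually.of_forall fun s => ?_)
    exact e s
  · rw [h2, ← integral_const_mul]
    have := integral_re h3
    rw [← RCLike.re_eq_complex_re, ← this]
    congr 1; ext s; exact e s

lemma dl_re_nonpos {x : ℂ} (hx : ‖x‖ < 1) (h : x.re ≤ 0) : (dilog x).re ≤ 0 := by
  have h1 := (dl_re_integral hx 1).2
  rw [one_mul] at h1
  rw [h1]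
  refine setIntegral_nonpos measurableSet_Ioi fun s hs => ?_
  have hs : 0 < s := hs
  have ht : Real.exp (-s) ≤ 1 := Real.exp_le_one_iff.2 (by linarith)
  rw [one_mul, re_kernel]
  apply mul_nonpos_of_nonneg_of_nonpos (by positivity)
  apply div_nonpos_of_nonpos_of_nonneg
  · have : 0 ≤ Real.exp (-s) * ‖x‖ ^ 2 := by positivity
    linarith
  · exact (den_pos hx (Real.exp_pos _) ht).le

lemma dl_im_zero {x : ℂ} (hx : ‖x‖ < 1) (h : x.im = 0) : (dilog x).im = 0 := by
  have h1 := (dl_re_integral hx (-I)).2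
  have : (-I * dilog x).re = (dilog x).im := by simp
  rw [this] at h1
  rw [h1]
  have : ∀ s : ℝ, (-I * (x / (1 - x * (Real.exp (-s) : ℝ)))).re = 0 := by
    intro s
    have : (-I * (x / (1 - x * (Real.exp (-s) : ℝ)))).re = (x / (1 - x * (Real.exp (-s) : ℝ))).im := by simp
    rw [this, im_kernel, h, zero_div]
  simp only [this, mul_zero, integral_zero]

lemma ker_lower {v : ℝ} (h0 : 0 ≤ v) (h1 : v ≤ 1) :
    (1 - 3 * v + 13/4 * v ^ 2 - 5/4 * v ^ 3) * (1 + v) ^ 2 ≤ 1 - v := by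
  have : (1 - 3 * v + 13/4 * v ^ 2 - 5/4 * v ^ 3) * (1 + v) ^ 2 =
    (1 - v) * (1 - v ^ 2 * (1 - v) * (7/4 + 5/4 * v)) := by ring
  rw [this]
  have : 0 ≤ v ^ 2 * (1 - v) * (7/4 + 5/4 * v) := by
    have : 0 ≤ 1 - v := by linarith
    positivity
  nlinarith

/-- Key lower bound. -/
lemma dl_lower {x : ℂ} (hx : ‖x‖ < 1) :
    0.53 * (‖x‖ + x.re) ≤ ‖dilog x‖ + (dilog x).re := by
  by_cases hx0 : x = 0
  · simp [hx0, dl_zero]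
  have hr : 0 < ‖x‖ := norm_pos_iff.2 hx0
  set r := ‖x‖ with hrdef
  set c : ℂ := 1 + (starRingEnd ℂ x) / r with hc
  have hxr : 0 ≤ r + x.re := by linarith [Complex.abs_re_le_norm x, neg_abs_le x.re]
  have h1 : (c * dilog x).re ≤ ‖dilog x‖ + (dilog x).re := by
    rw [hc, add_mul, one_mul, Complex.add_re]
    have : ((starRingEnd ℂ x) / r * dilog x).re ≤ ‖dilog x‖ := by
      refine (Complex.re_le_norm _).trans ?_
      rw [norm_mul, norm_div, RCLike.norm_conj, Complex.norm_real, Real.norm_of_nonneg hr.le, ← hrdef,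
        div_self hr.ne', one_mul]
    linarith
  refine le_trans ?_ h1
  obtain ⟨hi, he⟩ := dl_re_integral hx c
  rw [he]
  have hcx : ∀ t : ℝ, (c * (x / (1 - x * (t:ℂ)))).re = (r + x.re) * (1 - t * r) / (1 - 2 * t * x.re + t ^ 2 * r ^ 2) := by
    intro t
    have e1 : c * (x / (1 - x * (t:ℂ))) = ((x + r) / (1 - x * (t:ℂ))) := by
      have : c * x = x + r := by
        have h2 : (starRingEnd ℂ x) * x = (r:ℂ) ^ 2 := by
          rw [mul_comm, Complex.mul_conj, Complex.normSq_eq_norm_sq]; push_cast; rfl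
        have h3 : (r : ℂ) ≠ 0 := by exact_mod_cast hr.ne'
        rw [hc, add_mul, one_mul, div_mul_eq_mul_div, h2]
        field_simp
      rw [← this]; ring
    rw [e1, Complex.div_re, nsq_one_sub, ← add_div, ← hrdef]
    congr 1
    have := @nsq x
    rw [← hrdef] at this
    simp
    linear_combination (-t) * this
  have hpoly : ∀ s ∈ Set.Ioi (0:ℝ), (r + x.re) * ((s * Real.exp (-s) ^ (0 + 1)) - 3 * r * (s * Real.exp (-s) ^ (1 + 1))
      + 13/4 * r ^ 2 * (s * Real.exp (-s) ^ (2+1)) - 5/4 * r ^ 3 * (s * Real.exp (-s) ^ (3 + 1)))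
      ≤ (s * Real.exp (-s)) * (c * (x / (1 - x * (Real.exp (-s) : ℝ)))).re := by
    intro s hs
    have hs : 0 < s := hs
    rw [hcx]
    have ht0 := Real.exp_pos (-s)
    have ht : Real.exp (-s) ≤ 1 := Real.exp_le_one_iff.2 (by linarith)
    set t := Real.exp (-s)
    have hv1 : t * r ≤ 1 := by nlinarith
    have hk := ker_lower (v := t * r) (by positivity) hv1
    have hd := den_pos hx ht0 ht
    rw [← hrdef] at hd
    have hD : 1 - 2 * t * x.re + t ^ 2 * r ^ 2 ≤ (1 + t * r) ^ 2 := by nlinarith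
    have : (1 - 3 * (t*r) + 13/4 * (t*r) ^ 2 - 5/4 * (t*r) ^ 3) ≤ (1 - t * r) / (1 - 2 * t * x.re + t ^ 2 * r ^ 2) := by
      have h5 : (1 - t * r) / (1 + t * r) ^ 2 ≤ (1 - t * r) / (1 - 2 * t * x.re + t ^ 2 * r ^ 2) := by
        apply div_le_div_of_nonneg_left (by linarith) hd hD
      refine le_trans ?_ h5
      rw [le_div_iff₀ (by positivity)]
      exact hk
    have h6 : 0 ≤ (r + x.re) * (s * t) := by positivity
    have h7 := mul_le_mul_of_nonneg_left this h6
    rw [mul_div_assoc]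
    calc _ = (r + x.re) * (s * t) * (1 - 3 * (t*r) + 13/4 * (t*r) ^ 2 - 5/4 * (t*r) ^ 3) := by ring
      _ ≤ _ := h7
      _ = _ := by ring
  have hInt : ∀ n, IntegrableOn (fun s : ℝ => s * Real.exp (-s) ^ (n + 1)) (Set.Ioi 0) := li_integrable
  have hI := setIntegral_mono_on (μ := volume) (s := Set.Ioi (0:ℝ))
    (((((hInt 0).sub ((hInt 1).const_mul (3 * r))).add ((hInt 2).const_mul (13/4 * r^2))).sub ((hInt 3).const_mul (5/4*r^3))).const_mul (r + x.re))
    hi measurableSet_Ioi hpoly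
  refine le_trans ?_ hI
  rw [integral_const_mul]
  simp only [Pi.sub_apply, Pi.add_apply]
  rw [integral_sub, integral_add, integral_sub, integral_const_mul, integral_const_mul, integral_const_mul, li_int, li_int, li_int, li_int]
  · rw [mul_comm]
    apply mul_le_mul_of_nonneg_left _ hxr
    norm_num
    have hr1 : r < 1 := hx
    nlinarith [mul_pos hr hr, mul_nonneg (sub_nonneg.2 hr1.le) (sub_nonneg.2 hr1.le), mul_nonneg hr.le (mul_nonneg (sub_nonneg.2 hr1.le) (sub_nonneg.2 hr1.le)), mul_nonneg (mul_nonneg hr.le hr.le) (sub_nonneg.2 hr1.le)]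
  · exact (hInt 0)
  · exact ((hInt 1).const_mul (3 * r))
  · exact ((hInt 0).sub ((hInt 1).const_mul (3 * r)))
  · exact ((hInt 2).const_mul (13/4 * r^2))
  · exact (((hInt 0).sub ((hInt 1).const_mul (3 * r))).add ((hInt 2).const_mul (13/4 * r^2)))
  · exact ((hInt 3).const_mul (5/4*r^3))

end

section
open Complex Filter MeasureTheory Topology

lemma pi_bound : Real.pi ^ 2 / 6 ≤ 1.645 := by
  have := Real.pi_lt_d4
  nlinarith [Real.pi_pos]

lemma f1_sq_lower {x : ℂ} (hx : ‖x‖ < 1) : 0.265 * (‖x‖ + x.re) ≤ fk 1 x ^ 2 := by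
  rw [fk_sq]
  have := dl_lower hx
  simp only [pow_one, Nat.cast_one]
  linarith

lemma re_sq (x : ℂ) : (x ^ 2).re = 2 * x.re ^ 2 - ‖x‖ ^ 2 := by
  rw [← nsq, pow_two, Complex.mul_re]; ring

lemma norm_pow_lt {x : ℂ} (hx : ‖x‖ < 1) {k : ℕ} (hk : k ≠ 0) : ‖x ^ k‖ < 1 := by
  rw [norm_pow]; exact pow_lt_one₀ (norm_nonneg _) hx hk

lemma f2_sq_lower {x : ℂ} (hx : ‖x‖ < 1) : 0.1325 * x.re ^ 2 ≤ fk 2 x ^ 2 := by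
  rw [fk_sq]
  have := dl_lower (norm_pow_lt hx (k := 2) (by norm_num))
  rw [re_sq, norm_pow] at this
  push_cast
  linarith

lemma fk_sq_upper {x : ℂ} (hx : ‖x‖ < 1) {k : ℕ} (hk : k ≠ 0) : fk k x ^ 2 ≤ 1.645 * ‖x‖ ^ k / k ^ 2 := by
  rw [fk_sq]
  have h1 := dl_norm_le (norm_pow_lt hx hk).le
  have h2 := Complex.re_le_norm (dilog (x ^ k))
  have h3 := pi_bound
  rw [norm_pow] at h1
  have h4 : ‖dilog (x^k)‖ ≤ 1.645 * ‖x‖ ^ k := by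
    refine h1.trans ?_
    rw [mul_comm]; gcongr
  have : (0:ℝ) < k := by positivity
  rw [div_le_div_iff₀ (by positivity) (by positivity)]
  have : (0:ℝ) < (k:ℝ)^2 := by positivity
  nlinarith

lemma f4_sq_upper {x : ℂ} (hx : ‖x‖ < 1) (h : (x ^ 4).re ≤ 0) : fk 4 x ^ 2 ≤ 0.0515 * ‖x‖ ^ 4 := by
  rw [fk_sq]
  have h1 := dl_norm_le (norm_pow_lt hx (k := 4) (by norm_num)).le
  have h2 := dl_re_nonpos (norm_pow_lt hx (k := 4) (by norm_num)) h
  have h3 := pi_bound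
  rw [norm_pow] at h1
  have h4 : ‖dilog (x^4)‖ ≤ 1.645 * ‖x‖ ^ 4 := by
    refine h1.trans ?_
    rw [mul_comm]; gcongr
  push_cast
  have : 0 ≤ ‖x‖ ^ 4 := by positivity
  linarith

lemma region_k {x : ℂ} (hx : ‖x‖ < 1) (h21 : fk 2 x ≤ fk 1 x) {k : ℕ} (hk : 4 ≤ k) :
    fk k x ≤ fk 1 x := by
  apply le_of_sq_le_sq _ (fk_nonneg _ _)
  have a1 := f1_sq_lower hx
  have a2 : 0.1325 * x.re ^ 2 ≤ fk 1 x ^ 2 :=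
    (f2_sq_lower hx).trans (pow_le_pow_left₀ (fk_nonneg _ _) h21 2)
  have hr0 := norm_nonneg x
  have hXr : 0 ≤ ‖x‖ + x.re := by linarith [Complex.abs_re_le_norm x, neg_abs_le x.re]
  have hXr2 := Complex.re_le_norm x
  set r := ‖x‖ with hr
  set X := x.re
  set A := fk 1 x ^ 2
  have a3 : 0.265 * (r ^ 2 + r * X) ≤ A := by nlinarith
  have a4 : 0.0659 * r ^ 2 ≤ A := by nlinarith [sq_nonneg (X + 0.732 * r)]
  rcases hk.eq_or_lt with rfl | hk5
  · by_cases h4 : (x ^ 4).re ≤ 0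
    · have := f4_sq_upper hx h4
      rw [← hr] at this
      have : r ^ 4 ≤ r ^ 2 := pow_le_pow_of_le_one hr0 hx.le (by norm_num)
      nlinarith
    · have b := fk_sq_upper hx (k := 4) (by norm_num)
      rw [← hr] at b
      push_cast at b
      have hr4 : r ^ 4 ≤ r ^ 2 := pow_le_pow_of_le_one hr0 hx.le (by norm_num)
      have h5 : (x ^ 4).re = 2 * (2 * X ^ 2 - r ^ 2) ^ 2 - r ^ 4 := by
        rw [show x ^ 4 = (x ^ 2) ^ 2 by ring, re_sq, re_sq, norm_pow]; ring
      push Not at h4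
      rw [h5] at h4
      have h6 : 0.7 * r ^ 2 < |2 * X ^ 2 - r ^ 2| := by
        apply lt_of_pow_lt_pow_left₀ 2 (abs_nonneg _)
        rw [sq_abs]; nlinarith [sq_nonneg (r^2)]
      rcases lt_abs.1 h6 with h7 | h7
      · nlinarith
      · have : -0.4 * r ≤ X := by
          by_contra hc
          push Not at hc
          nlinarith
        nlinarith
  · have b := fk_sq_upper hx (k := k) (by omega)
    rw [← hr] at b
    refine b.trans (le_trans ?_ a4)
    have hk' : (5:ℝ) ≤ k := by exact_mod_cast hk5
    rw [div_le_iff₀ (by positivity)]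
    have h7 : r ^ k ≤ r ^ 2 := pow_le_pow_of_le_one hr0 hx.le (by omega)
    have h8 : (25:ℝ) ≤ (k:ℝ) ^ 2 := by nlinarith
    have h9 : 0 ≤ r ^ 2 := by positivity
    nlinarith

lemma f1_pos {x : ℂ} (hx : x ∈ interior R1) : 0 < fk 1 x := by
  obtain ⟨hx1, h2, -⟩ := interior_subset hx
  by_contra hc
  have h0 : fk 1 x = 0 := le_antisymm (not_lt.1 hc) (fk_nonneg _ _)
  have a1 := f1_sq_lower hx1
  have a2 : 0.1325 * x.re ^ 2 ≤ fk 1 x ^ 2 :=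
    (f2_sq_lower hx1).trans (pow_le_pow_left₀ (fk_nonneg _ _) h2 2)
  rw [h0] at a1 a2
  have hX : x.re = 0 := by
    have : x.re ^ 2 ≤ 0 := by linarith
    exact pow_eq_zero_iff (two_ne_zero) |>.1 (le_antisymm this (sq_nonneg _))
  have hr : x = 0 := by
    rw [hX] at a1
    have := norm_nonneg x
    exact norm_eq_zero.1 (by linarith)
  subst hr
  have hnh : R1 ∈ 𝓝 (0:ℂ) := mem_interior_iff_mem_nhds.1 hx
  obtain ⟨ε, hε, hb⟩ := Metric.mem_nhds_iff.1 hnh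
  obtain ⟨h1, h2, -⟩ := hb (show ((-(ε/2) : ℝ) : ℂ) ∈ Metric.ball 0 ε by
    rw [mem_ball_zero_iff, Complex.norm_real, norm_neg, Real.norm_of_nonneg (by positivity)]; linarith)
  set y : ℂ := ((-(ε/2) : ℝ) : ℂ) with hy
  have hz : fk 1 y = 0 := by
    have := fk_sq 1 y
    rw [pow_one] at this
    have hn : ‖dilog y‖ = -(dilog y).re := by
      have hre := dl_re_nonpos h1 (by simp [hy]; linarith)
      have him := dl_im_zero h1 (by simp [hy])
      rw [← abs_of_nonpos hre, Complex.abs_re_eq_norm.2 him] 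
    rw [hn] at this
    simpa using this
  have a2 : 0.1325 * y.re ^ 2 ≤ fk 1 y ^ 2 :=
    (f2_sq_lower h1).trans (pow_le_pow_left₀ (fk_nonneg _ _) h2 2)
  rw [hz] at a2
  have : y.re = -(ε/2) := by simp [hy]
  rw [this] at a2
  nlinarith

end

section
open Complex Filter MeasureTheory Topology

lemma slit_of_re_half {w : ℂ} (h : 0 < (w ^ (1 / 2 : ℂ)).re) : w ∈ Complex.slitPlane := by
  by_contra hc
  rw [Complex.mem_slitPlane_iff] at hc
  push Not at hc
  have h1 := re_half_sq w
  rw [← Complex.abs_re_eq_norm.2 hc.2, abs_of_nonpos hc.1] at h1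
  have : 0 < ((w ^ (1 / 2 : ℂ)).re) ^ 2 := by positivity
  linarith

lemma half_analyticAt {w : ℂ} (h : w ∈ Complex.slitPlane) : AnalyticAt ℂ (fun w : ℂ => w ^ (1/2 : ℂ)) w :=
  analyticAt_id.cpow analyticAt_const h

noncomputable def uk (k : ℕ) (y : ℂ) : ℂ := (1 / (k : ℂ)) * (dilog (y ^ k)) ^ (1 / 2 : ℂ)

lemma uk_re (k : ℕ) (y : ℂ) : (uk k y).re = fk k y := by
  rw [uk, fk, show (1 / (k : ℂ)) = ((1 / (k : ℝ) : ℝ) : ℂ) by push_cast; rfl, Complex.re_ofReal_mul]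

lemma uk_sq (k : ℕ) (y : ℂ) : (uk k y) ^ 2 = dilog (y ^ k) / k ^ 2 := by
  rw [uk, mul_pow, sq_half]; ring

lemma dlk_analytic {k : ℕ} (hk : k ≠ 0) : AnalyticOnNhd ℂ (fun y => dilog (y ^ k)) (Metric.ball 0 1) := by
  intro y hy
  have hy : ‖y‖ < 1 := by simpa using hy
  have : AnalyticAt ℂ dilog (y ^ k) := dl_analytic _ (by simpa using norm_pow_lt hy hk)
  exact this.comp_of_eq (analyticAt_id.pow k) rfl

lemma uk_analyticAt {k : ℕ} (hk : k ≠ 0) {x : ℂ} (hx : ‖x‖ < 1) (hpos : 0 < fk k x) :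
    AnalyticAt ℂ (uk k) x := by
  have hs : dilog (x ^ k) ∈ Complex.slitPlane := by
    apply slit_of_re_half
    rw [fk] at hpos
    exact pos_of_mul_pos_right hpos (by positivity)
  refine analyticAt_const.mul ?_
  exact (dlk_analytic hk x (by simpa using hx)).cpow analyticAt_const hs

lemma fk_lt {x : ℂ} (hx : x ∈ interior R1) {k : ℕ} (hk : 2 ≤ k) : fk k x < fk 1 x := by
  have hpos := f1_pos hx
  have hx1 : ‖x‖ < 1 := (interior_subset hx).1
  have hle : ∀ y ∈ R1, fk k y ≤ fk 1 y := by
    intro y hy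
    obtain ⟨h1, h2, h3⟩ := hy
    rcases (by omega : k = 2 ∨ k = 3 ∨ 4 ≤ k) with rfl | rfl | h
    · exact h2
    · exact h3
    · exact region_k h1 h2 h
  refine lt_of_le_of_ne (hle x (interior_subset hx)) fun heq => ?_
  have ak := uk_analyticAt (k := k) (by omega) hx1 (heq ▸ hpos)
  have a1 := uk_analyticAt (k := 1) (by omega) hx1 hpos
  have hnh : R1 ∈ 𝓝 x := mem_interior_iff_mem_nhds.1 hx
  have ad := ak.sub a1
  have ag : AnalyticAt ℂ (fun y => Complex.exp (uk k y - uk 1 y)) x := ad.cexp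
  have hmax : IsLocalMax (norm ∘ (fun y => Complex.exp (uk k y - uk 1 y))) x := by
    filter_upwards [hnh] with y hy
    simp only [Function.comp, Complex.norm_exp, Complex.sub_re, uk_re, heq, sub_self]
    exact Real.exp_le_exp.2 (by linarith [hle y hy])
  have hconst := Complex.eventually_eq_of_isLocalMax_norm
    (ag.eventually_analyticAt.mono fun y hy => hy.differentiableAt) hmax
  set c := uk k x - uk 1 x with hc
  have hD : ∀ᶠ y in 𝓝 x, uk k y - uk 1 y - c = 0 := by
    have hcont : ContinuousAt (fun y => (uk k y - uk 1 y - c).im) x :=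
      Complex.continuous_im.continuousAt.comp (ad.continuousAt.sub continuousAt_const)
    have h0 : (uk k x - uk 1 x - c).im = 0 := by rw [hc]; simp
    have hI := hcont.eventually_mem (s := Set.Ioo (-Real.pi) Real.pi)
      (Ioo_mem_nhds (by rw [h0]; linarith [Real.pi_pos]) (by rw [h0]; exact Real.pi_pos))
    filter_upwards [hconst, hI] with y hy hyI
    have he : Complex.exp (uk k y - uk 1 y - c) = 1 := by
      rw [Complex.exp_sub, hy, div_self (Complex.exp_ne_zero _)]
    have := Complex.log_exp hyI.1 hyI.2.le
    rw [he, Complex.log_one] at this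
    exact this.symm
  set H : ℂ → ℂ := fun y => (dilog (y ^ k) / k ^ 2 - dilog (y ^ 1) - c ^ 2) ^ 2 - 4 * c ^ 2 * dilog (y ^ 1) with hH
  have hHan : AnalyticOnNhd ℂ H (Metric.ball 0 1) := by
    intro y hy
    have b1 := dlk_analytic (k := k) (by omega) y hy
    have b2 := dlk_analytic (k := 1) (by omega) y hy
    exact (((b1.div_const.sub b2).sub analyticAt_const).pow 2).sub (analyticAt_const.mul b2)
  have hH0 : H =ᶠ[𝓝 x] 0 := by
    filter_upwards [hD] with y hy
    have e1 := uk_sq k y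
    have e2 := uk_sq 1 y
    simp only [Nat.cast_one, one_pow, div_one] at e2
    have e3 : uk k y = uk 1 y + c := by linear_combination hy
    simp only [hH, Pi.zero_apply]
    rw [← e1, ← e2, e3]; ring
  have hall := hHan.eqOn_zero_of_preconnected_of_eventuallyEq_zero
    (convex_ball (0:ℂ) 1).isPreconnected (by simpa using hx1) hH0
  have hc0 : c = 0 := by
    have := hall (show (0:ℂ) ∈ Metric.ball 0 1 by simp)
    simp only [hH, Pi.zero_apply] at this
    rw [zero_pow (by omega), zero_pow (by omega), dl_zero] at this
    simpa using this
  have h2 := hall (show (1/2:ℂ) ∈ Metric.ball 0 1 by simp; norm_num)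
  simp only [hH, Pi.zero_apply, hc0] at h2
  have hn2 : ‖(1/2 : ℂ)‖ = 1/2 := by simp
  have h3 : dilog ((1/2) ^ k) = k ^ 2 * dilog (1/2) := by
    have : (k:ℂ) ≠ 0 := by exact_mod_cast (by omega : k ≠ 0)
    have h4 : (dilog ((1/2) ^ k) / k ^ 2 - dilog (1/2)) = 0 := by
      simpa using h2
    field_simp at h4
    linear_combination h4
  have h5 := congrArg norm h3
  rw [norm_mul, norm_pow, Complex.norm_natCast] at h5
  have h6 := dl_norm_le (norm_pow_lt (x := 1/2) (by rw [hn2]; norm_num) (k := k) (by omega)).le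
  have h7 := dl_lower (x := 1/2) (by rw [hn2]; norm_num)
  rw [hn2] at h7
  rw [norm_pow, hn2, h5] at h6
  have h8 := Complex.re_le_norm (dilog (1/2))
  have h9 : ((1/2 : ℂ)).re = 1/2 := by norm_num
  rw [h9] at h7
  have hk2 : (4:ℝ) ≤ (k:ℝ)^2 := by
    have : (2:ℝ) ≤ k := by exact_mod_cast hk
    nlinarith
  have h10 : (1/2:ℝ)^k ≤ 1/2 := pow_le_of_le_one (by norm_num) (by norm_num) (by omega)
  have h11 := pi_bound
  have : 0 ≤ Real.pi ^ 2 / 6 := by positivity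
  nlinarith

end

section
open Complex Filter MeasureTheory Topology
open scoped PowerSeries.WithPiTopology

/-- absolutely summable evaluation of a formal power series -/
def PSEval (S : PowerSeries ℂ) (q v : ℂ) : Prop :=
  Summable (fun n => ‖PowerSeries.coeff n S * q ^ n‖) ∧ HasSum (fun n => PowerSeries.coeff n S * q ^ n) v

lemma cauchy_gen {a b c : ℕ → ℂ} {v u : ℂ} (ha : Summable (fun n => ‖a n‖)) (hb : Summable (fun n => ‖b n‖))
    (hv : HasSum a v) (hu : HasSum b u)
    (e : ∀ n, c n = ∑ kl ∈ Finset.HasAntidiagonal.antidiagonal n, a kl.1 * b kl.2) :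
    Summable (fun n => ‖c n‖) ∧ HasSum c (v * u) := by
  have hc : c = fun n => ∑ kl ∈ Finset.HasAntidiagonal.antidiagonal n, a kl.1 * b kl.2 := funext e
  have hs : Summable (fun n => ‖c n‖) := by
    rw [hc]
    exact summable_norm_sum_mul_antidiagonal_of_summable_norm ha hb
  refine ⟨hs, ?_⟩
  have h := tsum_mul_tsum_eq_tsum_sum_antidiagonal_of_summable_norm ha hb
  rw [hv.tsum_eq, hu.tsum_eq, ← hc] at h
  rw [h]
  exact hs.of_norm.hasSum

lemma PSEval.mul {S T : PowerSeries ℂ} {q v u : ℂ} (hS : PSEval S q v) (hT : PSEval T q u) :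
    PSEval (S * T) q (v * u) := by
  have e : ∀ n, PowerSeries.coeff n (S * T) * q ^ n = ∑ kl ∈ Finset.HasAntidiagonal.antidiagonal n,
      (PowerSeries.coeff kl.1 S * q ^ kl.1) * (PowerSeries.coeff kl.2 T * q ^ kl.2) := by
    intro n
    rw [PowerSeries.coeff_mul, Finset.sum_mul]
    refine Finset.sum_congr rfl fun kl hkl => ?_
    rw [← Finset.HasAntidiagonal.mem_antidiagonal.1 hkl, pow_add]; ring
  exact cauchy_gen hS.1 hT.1 hS.2 hT.2 e

lemma PSEval.one (q : ℂ) : PSEval 1 q 1 := by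
  have h : ∀ n, n ≠ 0 → PowerSeries.coeff n (1 : PowerSeries ℂ) * q ^ n = 0 := by
    intro n hn; simp [PowerSeries.coeff_one, hn]
  constructor
  · exact summable_of_ne_finset_zero (s := {0}) fun n hn => by rw [h n (by simpa using hn), norm_zero]
  · have := hasSum_single (f := fun n => PowerSeries.coeff n (1 : PowerSeries ℂ) * q ^ n) 0 (fun n hn => h n hn)
    simpa using this

noncomputable def gfac (z : ℂ) (i : ℕ) : PowerSeries ℂ :=
  1 + ∑' j, (z ^ (j + 1)) • (PowerSeries.X : PowerSeries ℂ) ^ ((i + 1) * (j + 1))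

lemma gfac_coeff (z : ℂ) (i d : ℕ) : PowerSeries.coeff d (gfac z i) =
    (if d = 0 then 1 else 0) + ∑' j, (if d = (i + 1) * (j + 1) then z ^ (j + 1) else 0) := by
  rw [gfac, map_add, (Nat.Partition.summable_genFun_term (fun _ c => z ^ c) i).map_tsum _
    (PowerSeries.WithPiTopology.continuous_coeff _ _), PowerSeries.coeff_one]
  congr 1
  refine tsum_congr fun j => ?_
  rw [map_smul, PowerSeries.coeff_X_pow]
  split_ifs <;> simp

lemma gfac_eval {z q : ℂ} (hz : ‖z‖ < 1) (hq : ‖q‖ < 1) (i : ℕ) :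
    PSEval (gfac z i) q (1 - z * q ^ (i + 1))⁻¹ := by
  have hinj : Function.Injective (fun j : ℕ => (i + 1) * j) := fun a b h => by
    simpa using h
  have h0 : ∀ d ∉ Set.range (fun j : ℕ => (i + 1) * j), PowerSeries.coeff d (gfac z i) * q ^ d = 0 := by
    intro d hd
    rw [gfac_coeff, if_neg, zero_add]
    · have : ∀ j, (if d = (i + 1) * (j + 1) then z ^ (j + 1) else 0) = 0 := by
        intro j
        rw [if_neg]
        rintro rfl
        exact hd ⟨j + 1, rfl⟩
      simp [this]
    · rintro rfl
      exact hd ⟨0, by simp⟩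
  have h1 : ∀ j, PowerSeries.coeff ((i + 1) * j) (gfac z i) = z ^ j := by
    intro j
    rw [gfac_coeff]
    rcases j with _ | j
    · simp
    · rw [if_neg (by positivity), zero_add, tsum_eq_single j]
      · simp
      · intro b hb
        rw [if_neg]
        intro h
        have := Nat.eq_of_mul_eq_mul_left (by omega) h
        omega
  have h2 : ∀ j, PowerSeries.coeff ((i + 1) * j) (gfac z i) * q ^ ((i + 1) * j) = (z * q ^ (i + 1)) ^ j := by
    intro j; rw [h1, mul_pow, pow_mul]
  have hlt : ‖z * q ^ (i + 1)‖ < 1 := by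
    rw [norm_mul]
    have := norm_pow_lt hq (k := i + 1) (by omega)
    nlinarith [norm_nonneg z, norm_nonneg (q ^ (i+1))]
  constructor
  · refine (hinj.summable_iff (f := fun n => ‖PowerSeries.coeff n (gfac z i) * q ^ n‖) (fun d hd => by rw [h0 d hd, norm_zero])).1 ?_
    simp only [Function.comp_def, h2, norm_pow]
    exact summable_geometric_of_lt_one (norm_nonneg _) hlt
  · refine (hinj.hasSum_iff h0).1 ?_
    simp only [Function.comp_def, h2]
    exact hasSum_geometric_of_norm_lt_one hlt

lemma gprod_eval {z q : ℂ} (hz : ‖z‖ < 1) (hq : ‖q‖ < 1) (N : ℕ) :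
    PSEval (∏ i ∈ Finset.range N, gfac z i) q (∏ i ∈ Finset.range N, (1 - z * q ^ (i + 1))⁻¹) := by
  induction N with
  | zero => simpa using PSEval.one q
  | succ N ih =>
    rw [Finset.prod_range_succ, Finset.prod_range_succ]
    exact ih.mul (gfac_eval hz hq N)

lemma F_eq {n : ℕ} (hn : 1 ≤ n) (z : ℂ) : F n z = ∑ p : Nat.Partition n, z ^ p.parts.card := by
  have hcard : ∀ p : Nat.Partition n, p.parts.card ∈ Finset.Icc 1 n := by
    intro p
    rw [Finset.mem_Icc]
    constructor
    · rw [Nat.one_le_iff_ne_zero, Ne, Multiset.card_eq_zero]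
      intro h
      have := p.parts_sum
      rw [h] at this; simp at this; omega
    · have h1 := Multiset.card_nsmul_le_sum (s := p.parts) (a := 1) (fun x hx => p.parts_pos hx)
      rw [p.parts_sum] at h1
      simpa using h1
  rw [F, ← Finset.sum_fiberwise_of_maps_to (s := Finset.univ) (t := Finset.Icc 1 n) (g := fun p : Nat.Partition n => p.parts.card) (fun p _ => hcard p)]
  refine Finset.sum_congr rfl fun k _ => ?_
  rw [partsCount, Nat.card_eq_fintype_card, Fintype.card_subtype]
  rw [Finset.sum_congr rfl (g := fun _ => z ^ k)]
  · simp
  · intro p hp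
    simp at hp
    rw [hp]

lemma gprod_coeff_tendsto {n : ℕ} (hn : 1 ≤ n) (z : ℂ) :
    Tendsto (fun N => PowerSeries.coeff n (∏ i ∈ Finset.range N, gfac z i)) atTop (𝓝 (F n z)) := by
  have h := (Nat.Partition.hasProd_genFun (R := ℂ) (fun _ c => z ^ c)).tendsto_prod_nat
  have h2 := ((PowerSeries.WithPiTopology.continuous_coeff ℂ n).tendsto _).comp h
  rw [Nat.Partition.coeff_genFun] at h2
  have e : ∑ p : Nat.Partition n, p.parts.toFinsupp.prod (fun _ c => z ^ c) = F n z := by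
    rw [F_eq hn]
    refine Finset.sum_congr rfl fun p _ => ?_
    rw [Finsupp.prod, Finset.prod_pow_eq_pow_sum]
    congr 1
    simp only [Multiset.toFinsupp_support, Multiset.toFinsupp_apply]
    exact Multiset.toFinset_sum_count_eq _
  rw [e] at h2
  exact h2

end

section
open Complex Filter MeasureTheory Topology

/-- logarithm of the generating function -/
noncomputable def Lam (z w : ℂ) : ℂ :=
  ∑' m : ℕ, z ^ (m + 1) / ((m : ℂ) + 1) * (1 / (Complex.exp (((m : ℂ) + 1) * w) - 1))

lemma coeff_integral {S : PowerSeries ℂ} {f : ℂ → ℂ} {σ : ℝ}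
    (hS : ∀ φ : ℝ, PSEval S (Complex.exp (-((σ : ℂ) + φ * I))) (f (Complex.exp (-((σ : ℂ) + φ * I))))) (n : ℕ) :
    ∫ φ in (-Real.pi)..Real.pi, f (Complex.exp (-((σ : ℂ) + φ * I))) * Complex.exp (n * ((σ : ℂ) + φ * I))
      = 2 * Real.pi * PowerSeries.coeff n S := by
  have hb : ∀ (m : ℕ) (φ : ℝ), ‖PowerSeries.coeff m S * Complex.exp (-((σ : ℂ) + φ * I)) ^ m * Complex.exp (n * ((σ : ℂ) + φ * I))‖
      = ‖PowerSeries.coeff m S * Complex.exp (-((σ : ℂ) + (0:ℝ) * I)) ^ m‖ * Real.exp (n * σ) := by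
    intro m φ
    simp [Complex.norm_exp]
  have h := intervalIntegral.hasSum_integral_of_dominated_convergence (μ := volume) (a := -Real.pi) (b := Real.pi)
    (F := fun (m : ℕ) (φ : ℝ) => PowerSeries.coeff m S * Complex.exp (-((σ : ℂ) + φ * I)) ^ m * Complex.exp (n * ((σ : ℂ) + φ * I)))
    (f := fun φ : ℝ => f (Complex.exp (-((σ : ℂ) + φ * I))) * Complex.exp (n * ((σ : ℂ) + φ * I)))
    (fun m _ => ‖PowerSeries.coeff m S * Complex.exp (-((σ : ℂ) + (0:ℝ) * I)) ^ m‖ * Real.exp (n * σ))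
    (fun m => by
      apply Continuous.aestronglyMeasurable
      fun_prop)
    (fun m => Eventually.of_forall fun φ _ => (hb m φ).le)
    (Eventually.of_forall fun φ _ => (hS 0).1.mul_right _)
    (by simp)
    (Eventually.of_forall fun φ _ => (hS φ).2.mul_right _)
  have hz : ∀ m : ℕ, m ≠ n → ∫ φ in (-Real.pi)..Real.pi, PowerSeries.coeff m S * Complex.exp (-((σ : ℂ) + φ * I)) ^ m * Complex.exp (n * ((σ : ℂ) + φ * I)) = 0 := by
    intro m hm
    have hd : ((n : ℂ) - m) ≠ 0 := by
      rw [sub_ne_zero]; exact_mod_cast hm.symm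
    have e : ∀ φ : ℝ, PowerSeries.coeff m S * Complex.exp (-((σ : ℂ) + φ * I)) ^ m * Complex.exp (n * ((σ : ℂ) + φ * I))
       = PowerSeries.coeff m S * Complex.exp (((n : ℂ) - m) * σ) * Complex.exp (((n : ℂ) - m) * I * φ) := by
      intro φ
      rw [← Complex.exp_nat_mul, mul_assoc, mul_assoc, ← Complex.exp_add, ← Complex.exp_add]
      congr 2; ring
    simp only [e]
    rw [intervalIntegral.integral_const_mul, integral_exp_mul_complex (mul_ne_zero hd I_ne_zero)]
    have : Complex.exp (((n : ℂ) - m) * I * (Real.pi : ℝ)) = Complex.exp (((n : ℂ) - m) * I * ((-Real.pi : ℝ) : ℂ)) := by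
      rw [Complex.exp_eq_exp_iff_exists_int]
      exact ⟨(n : ℤ) - m, by push_cast; ring⟩
    rw [this]; simp
  have h2 := h.unique (hasSum_single n hz)
  rw [h2]
  have e : ∀ φ : ℝ, PowerSeries.coeff n S * Complex.exp (-((σ : ℂ) + φ * I)) ^ n * Complex.exp (n * ((σ : ℂ) + φ * I))
      = PowerSeries.coeff n S := by
    intro φ
    rw [← Complex.exp_nat_mul, mul_assoc, ← Complex.exp_add, mul_neg, neg_add_cancel, Complex.exp_zero, mul_one]
  simp only [e]
  rw [intervalIntegral.integral_const]
  rw [show (Real.pi - -Real.pi) = 2 * Real.pi by ring]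
  simp

lemma exp_sub_one_lower {u : ℂ} (hu : 0 < u.re) : u.re ≤ ‖Complex.exp u - 1‖ := by
  have h1 := norm_sub_norm_le (Complex.exp u) 1
  rw [Complex.norm_exp, norm_one] at h1
  linarith [Real.add_one_le_exp u.re]

lemma exp_sub_one_ne {u : ℂ} (hu : 0 < u.re) : Complex.exp u - 1 ≠ 0 := by
  have := exp_sub_one_lower hu
  rw [← norm_pos_iff]; linarith

lemma re_mul_nat (m : ℕ) (w : ℂ) : (((m : ℂ) + 1) * w).re = ((m : ℝ) + 1) * w.re := by
  rw [show ((m : ℂ) + 1) = (((m : ℝ) + 1 : ℝ) : ℂ) by push_cast; rfl, Complex.re_ofReal_mul]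

lemma norm_nat1 (m : ℕ) : ‖((m : ℂ) + 1)‖ = (m : ℝ) + 1 := by
  rw [← Nat.cast_succ, Complex.norm_natCast]; push_cast; rfl

lemma Lam_term_bound (z : ℂ) {w : ℂ} (hw : 0 < w.re) (m : ℕ) :
    ‖z ^ (m + 1) / ((m : ℂ) + 1) * (1 / (Complex.exp (((m : ℂ) + 1) * w) - 1))‖
      ≤ ‖z‖ ^ (m + 1) / (((m : ℝ) + 1) ^ 2 * w.re) := by
  have h1 : 0 < (((m : ℂ) + 1) * w).re := by rw [re_mul_nat]; positivity
  have h2 := exp_sub_one_lower h1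
  rw [re_mul_nat] at h1 h2
  rw [norm_mul, norm_div, norm_div, norm_nat1, norm_pow, norm_one, div_mul_div_comm, mul_one]
  apply div_le_div_of_nonneg_left (by positivity) (by positivity)
  calc ((m : ℝ) + 1) ^ 2 * w.re = ((m : ℝ) + 1) * (((m : ℝ) + 1) * w.re) := by ring
    _ ≤ _ := by gcongr

lemma exp_Lam_tendsto {z w : ℂ} (hz : ‖z‖ < 1) (hw : 0 < w.re) :
    Tendsto (fun N => ∏ i ∈ Finset.range N, (1 - z * Complex.exp (-w) ^ (i + 1))⁻¹) atTop (𝓝 (Complex.exp (Lam z w)))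
    ∧ ∀ N, ‖∏ i ∈ Finset.range N, (1 - z * Complex.exp (-w) ^ (i + 1))⁻¹‖ ≤ Real.exp (∑' m : ℕ, ‖z‖ ^ m / w.re) := by
  set q := Complex.exp (-w) with hq
  have hqn : ‖q‖ < 1 := by
    rw [hq, Complex.norm_exp]; simpa using hw
  have hzq : ∀ i : ℕ, ‖z * q ^ (i + 1)‖ < 1 := by
    intro i
    rw [norm_mul]
    have := norm_pow_lt hqn (k := i + 1) (by omega)
    nlinarith [norm_nonneg z, norm_nonneg (q ^ (i+1))]
  have hlog : ∀ N, HasSum (fun m : ℕ => z ^ (m + 1) / ((m : ℂ) + 1) * ∑ i ∈ Finset.range N, (q ^ (m + 1)) ^ (i + 1))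
      (∑ i ∈ Finset.range N, -Complex.log (1 - z * q ^ (i + 1))) := by
    intro N
    refine (hasSum_sum fun i _ => Complex.hasSum_taylorSeries_neg_log' (hzq i)).congr_fun fun m => ?_
    rw [Finset.mul_sum]
    refine Finset.sum_congr rfl fun i _ => ?_
    rw [mul_pow, ← pow_mul, ← pow_mul, mul_comm (m + 1) (i + 1)]; ring
  have hprod : ∀ N, ∏ i ∈ Finset.range N, (1 - z * q ^ (i + 1))⁻¹ =
      Complex.exp (∑' m : ℕ, z ^ (m + 1) / ((m : ℂ) + 1) * ∑ i ∈ Finset.range N, (q ^ (m + 1)) ^ (i + 1)) := by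
    intro N
    rw [(hlog N).tsum_eq, Complex.exp_sum]
    refine Finset.prod_congr rfl fun i _ => ?_
    rw [Complex.exp_neg, Complex.exp_log]
    intro h0
    have : z * q ^ (i + 1) = 1 := by linear_combination -h0
    have h3 := hzq i
    rw [this, norm_one] at h3
    exact lt_irrefl _ h3
  have hqs : ‖q‖ / (1 - ‖q‖) ≤ 1 / w.re := by
    have h4 : ‖q‖ = Real.exp (- w.re) := by rw [hq, Complex.norm_exp]; simp
    have h5 : ‖q‖ * Real.exp w.re = 1 := by rw [h4, ← Real.exp_add]; simp
    have h6 := Real.add_one_le_exp w.re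
    rw [div_le_div_iff₀ (by linarith) hw]
    have : ‖q‖ * (w.re + 1) ≤ ‖q‖ * Real.exp w.re := mul_le_mul_of_nonneg_left h6 (norm_nonneg q)
    linarith
  have hin : ∀ N m : ℕ, ‖∑ i ∈ Finset.range N, (q ^ (m + 1)) ^ (i + 1)‖ ≤ 1 / w.re := by
    intro N m
    refine le_trans ?_ hqs
    refine (norm_sum_le _ _).trans ?_
    have hs := (hasSum_geometric_of_lt_one (norm_nonneg q) hqn).mul_left ‖q‖
    rw [div_eq_mul_inv]
    refine le_trans ?_ (sum_le_hasSum (Finset.range N) (fun i _ => by positivity) hs)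
    refine Finset.sum_le_sum fun i _ => ?_
    rw [← pow_mul, norm_pow, ← pow_succ']
    apply pow_le_pow_of_le_one (norm_nonneg _) hqn.le
    nlinarith
  have hterm : ∀ N m : ℕ, ‖z ^ (m + 1) / ((m : ℂ) + 1) * ∑ i ∈ Finset.range N, (q ^ (m + 1)) ^ (i + 1)‖ ≤ ‖z‖ ^ m / w.re := by
    intro N m
    rw [norm_mul, norm_div, norm_nat1, norm_pow, div_eq_mul_one_div (‖z‖ ^ m)]
    refine mul_le_mul ?_ (hin N m) (norm_nonneg _) (by positivity)
    rw [div_le_iff₀ (by positivity)]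
    have : ‖z‖ ^ (m + 1) ≤ ‖z‖ ^ m := pow_le_pow_of_le_one (norm_nonneg _) hz.le (by omega)
    have h7 : 0 ≤ ‖z‖ ^ m := by positivity
    have h8 : (0:ℝ) ≤ m := by positivity
    nlinarith
  have hsum : Summable (fun m : ℕ => ‖z‖ ^ m / w.re) :=
    (summable_geometric_of_lt_one (norm_nonneg _) hz).div_const _
  constructor
  · simp only [hprod]
    refine (Complex.continuous_exp.tendsto _).comp ?_
    refine tendsto_tsum_of_dominated_convergence hsum ?_ (Eventually.of_forall fun N m => hterm N m)
    intro m
    refine Tendsto.const_mul _ ?_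
    have hy : ‖q ^ (m + 1)‖ < 1 := norm_pow_lt hqn (by omega)
    have h9 := ((hasSum_geometric_of_norm_lt_one hy).mul_left (q ^ (m+1))).tendsto_sum_nat
    have e : q ^ (m + 1) * (1 - q ^ (m + 1))⁻¹ = 1 / (Complex.exp (((m : ℂ) + 1) * w) - 1) := by
      have e1 : q ^ (m + 1) = (Complex.exp (((m : ℂ) + 1) * w))⁻¹ := by
        rw [hq, ← Complex.exp_nat_mul, ← Complex.exp_neg]; push_cast; congr 1; ring
      have e2 := exp_sub_one_ne (u := ((m : ℂ) + 1) * w) (by rw [re_mul_nat]; positivity)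
      have e3 := Complex.exp_ne_zero (((m : ℂ) + 1) * w)
      rw [e1]
      have e4 : 1 - (Complex.exp (((m : ℂ) + 1) * w))⁻¹ ≠ 0 := by
        intro h
        apply e2
        field_simp at h
        simpa using h
      field_simp
    rw [e] at h9
    refine h9.congr fun N => ?_
    refine Finset.sum_congr rfl fun i _ => ?_
    rw [← pow_succ']
  · intro N
    rw [hprod, Complex.norm_exp]
    apply Real.exp_le_exp.2
    refine (Complex.re_le_norm _).trans ?_
    exact tsum_of_norm_bounded hsum.hasSum (hterm N)

lemma F_integral {n : ℕ} (hn : 1 ≤ n) {z : ℂ} (hz : ‖z‖ < 1) {σ : ℝ} (hσ : 0 < σ) :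
    ∫ φ in (-Real.pi)..Real.pi, Complex.exp (Lam z ((σ : ℂ) + φ * I)) * Complex.exp (n * ((σ : ℂ) + φ * I))
      = 2 * Real.pi * F n z := by
  have hre : ∀ φ : ℝ, ((σ : ℂ) + φ * I).re = σ := by intro φ; simp
  have hw : ∀ φ : ℝ, 0 < ((σ : ℂ) + φ * I).re := by intro φ; rw [hre]; exact hσ
  have h1 : ∀ N, ∫ φ in (-Real.pi)..Real.pi, (∏ i ∈ Finset.range N, (1 - z * Complex.exp (-((σ : ℂ) + φ * I)) ^ (i + 1))⁻¹) * Complex.exp (n * ((σ : ℂ) + φ * I))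
      = 2 * Real.pi * PowerSeries.coeff n (∏ i ∈ Finset.range N, gfac z i) := by
    intro N
    refine coeff_integral (f := fun q => ∏ i ∈ Finset.range N, (1 - z * q ^ (i + 1))⁻¹) (fun φ => gprod_eval hz ?_ N) n
    rw [Complex.norm_exp]; simpa using hσ
  have h2 := (gprod_coeff_tendsto hn z).const_mul (2 * (Real.pi : ℂ))
  simp only [← h1] at h2
  refine tendsto_nhds_unique ?_ h2
  refine intervalIntegral.tendsto_integral_filter_of_dominated_convergence
    (fun _ => Real.exp (∑' m : ℕ, ‖z‖ ^ m / σ) * Real.exp (n * σ)) ?_ ?_ (by simp) ?_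
  · refine Eventually.of_forall fun N => Measurable.aestronglyMeasurable ?_
    fun_prop
  · refine Eventually.of_forall fun N => Eventually.of_forall fun φ _ => ?_
    rw [norm_mul]
    have := (exp_Lam_tendsto hz (hw φ)).2 N
    rw [hre] at this
    refine mul_le_mul this ?_ (norm_nonneg _) (Real.exp_pos _).le
    rw [Complex.norm_exp]; simp
  · refine Eventually.of_forall fun φ _ => ?_
    exact (exp_Lam_tendsto hz (hw φ)).1.mul_const _

end

section
open Complex Filter MeasureTheory Topology

lemma ultra_lim {ι : Type*} (u : Ultrafilter ι) {f : ι → ℂ} {C : ℝ} (h : ∀ᶠ i in (u : Filter ι), ‖f i‖ ≤ C) :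
    ∃ c, ‖c‖ ≤ C ∧ Tendsto f u (𝓝 c) := by
  obtain ⟨c, hc, hl⟩ := (isCompact_closedBall (0:ℂ) C).ultrafilter_le_nhds' (u.map f) (by
    rw [Ultrafilter.mem_map]
    filter_upwards [h] with i hi
    simpa using hi)
  exact ⟨c, by simpa using hc, hl⟩

lemma exp_div_lim {ι : Type*} {l : Filter ι} {v : ι → ℂ} (hv : Tendsto v l (𝓝 0)) (h0 : ∀ᶠ i in l, v i ≠ 0) {m : ℂ} (hm : m ≠ 0) :
    Tendsto (fun i => v i / (Complex.exp (m * v i) - 1)) l (𝓝 (1 / m)) := by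
  have hd : HasDerivAt (fun x : ℂ => Complex.exp (m * x)) m 0 := by
    have := ((hasDerivAt_id (0:ℂ)).const_mul m).cexp
    simpa using this
  have h1 := hd.tendsto_slope
  have h2 : Tendsto v l (𝓝[≠] 0) := tendsto_nhdsWithin_iff.2 ⟨hv, h0⟩
  have h3 := (h1.comp h2).inv₀ hm
  rw [one_div]
  refine h3.congr fun i => ?_
  simp [slope_def_field]

lemma sub_sum {z r : ℂ} (hz : ‖z‖ < 1) {k : ℕ} (hk : 0 < k) :
    HasSum (fun m : ℕ => z ^ (m + 1) / ((m : ℂ) + 1) * (if k ∣ m + 1 then r / ((m : ℂ) + 1) else 0))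
      (r * dilog (z ^ k) / (k : ℂ) ^ 2) := by
  have hinj : Function.Injective (fun l : ℕ => k * (l + 1) - 1) := by
    intro a b h
    have h1 : 0 < k * (a + 1) := by positivity
    have h2 : 0 < k * (b + 1) := by positivity
    have h3 : k * (a + 1) = k * (b + 1) := by
      simp only at h; omega
    have := Nat.eq_of_mul_eq_mul_left hk h3
    omega
  refine (hinj.hasSum_iff ?_).1 ?_
  · intro m hm
    rw [if_neg, mul_zero]
    rintro ⟨c, hc⟩
    apply hm
    rcases c with _ | c
    · omega
    · exact ⟨c, by simp only; omega⟩
  · have h := ((dl_hasSum (norm_pow_lt hz hk.ne').le).mul_left r).div_const ((k : ℂ) ^ 2)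
    refine h.congr_fun fun l => ?_
    have h1 : k * (l + 1) - 1 + 1 = k * (l + 1) := by
      have h1 : 0 < k * (l + 1) := by positivity
      omega
    have h2 : (((k * (l + 1) - 1 : ℕ) : ℂ) + 1) = k * (l + 1) := by
      rw [← Nat.cast_succ, Nat.succ_eq_add_one, h1]; push_cast; rfl
    simp only [Function.comp]
    rw [h1, h2, if_pos (Dvd.intro _ rfl), ← pow_mul]
    have h3 : (k : ℂ) ≠ 0 := by exact_mod_cast hk.ne'
    have h4 : (l : ℂ) + 1 ≠ 0 := by exact_mod_cast Nat.succ_ne_zero l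
    field_simp

lemma re_half_lim {ι : Type*} {u : Ultrafilter ι} {σ ψ : ι → ℝ} (hσ : ∀ᶠ i in (u : Filter ι), 0 < σ i) {r : ℂ}
    (hr : Tendsto (fun i => (σ i : ℂ) / (σ i + ψ i * I)) u (𝓝 r)) (w : ℂ) : (r * w).re ≤ (‖w‖ + w.re) / 2 := by
  have h1 := (Complex.continuous_re.tendsto _).comp (hr.mul_const w)
  refine le_of_tendsto h1 ?_
  filter_upwards [hσ] with i hi
  have := re_div_le w (ψ i / σ i)
  have h0 : (σ i : ℂ) ≠ 0 := by exact_mod_cast hi.ne'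
  have e : (1 + ((ψ i / σ i : ℝ) : ℂ) * I) = (σ i + ψ i * I) / σ i := by push_cast; field_simp
  rw [e] at this
  have e2 : w / (((σ i : ℂ) + ψ i * I) / σ i) = (σ i : ℂ) / (σ i + ψ i * I) * w := by
    rw [div_div_eq_mul_div]; ring
  rw [e2] at this
  exact this

lemma minor_limit {ι : Type*} (u : Ultrafilter ι) {σ φ : ι → ℝ} {ζ : ι → ℂ} {z : ℂ} (hz : ‖z‖ < 1)
    (hζ : Tendsto ζ u (𝓝 z)) (hσ : ∀ᶠ i in (u : Filter ι), 0 < σ i) (hσ0 : Tendsto σ u (𝓝 0))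
    (hφ : ∀ᶠ i in (u : Filter ι), φ i ∈ Set.Icc (-Real.pi) Real.pi) {ε : ℝ}
    (hε : ∀ᶠ i in (u : Filter ι), σ i ≤ ε * |φ i|) :
    ∃ L, Tendsto (fun i => (σ i : ℂ) * Lam (ζ i) (σ i + φ i * I)) u (𝓝 L) ∧
      (L.re ≤ 0 ∨ (∃ k ≥ 2, L.re ≤ fk k z ^ 2) ∨ L.re ≤ ε * ‖dilog z‖) := by
  obtain ⟨θ, hθ, hlθ⟩ := (isCompact_Icc (a := -Real.pi) (b := Real.pi)).ultrafilter_le_nhds' (u.map φ) hφ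
  have hφθ : Tendsto φ u (𝓝 θ) := hlθ
  set ψ : ι → ℝ := fun i => φ i - θ with hψ
  have hψ0 : Tendsto ψ u (𝓝 0) := by simpa using hφθ.sub_const θ
  have hσn : Tendsto (fun i => (σ i : ℂ)) u (𝓝 0) := by
    simpa [Function.comp_def] using (Complex.continuous_ofReal.tendsto _).comp hσ0
  have hψn : Tendsto (fun i => (ψ i : ℂ)) u (𝓝 0) := by
    simpa [Function.comp_def] using (Complex.continuous_ofReal.tendsto _).comp hψ0
  have hv : Tendsto (fun i => (σ i : ℂ) + ψ i * I) u (𝓝 0) := by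
    simpa using hσn.add (hψn.mul_const I)
  have hvre : ∀ i, ((σ i : ℂ) + ψ i * I).re = σ i := by intro i; simp
  have hv0 : ∀ᶠ i in (u : Filter ι), (σ i : ℂ) + ψ i * I ≠ 0 := by
    filter_upwards [hσ] with i hi h
    have := hvre i
    rw [h] at this
    simp at this; linarith
  obtain ⟨r, hr1, hr⟩ := ultra_lim u (f := fun i => (σ i : ℂ) / (σ i + ψ i * I)) (C := 1) (by
    filter_upwards [hσ] with i hi
    rw [norm_div, Complex.norm_real, Real.norm_of_nonneg hi.le]
    apply div_le_one_of_le₀ _ (norm_nonneg _)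
    have := Complex.re_le_norm ((σ i : ℂ) + ψ i * I)
    rwa [hvre] at this)
  set E := Complex.exp (θ * I) with hE
  have hc : ∀ m : ℕ, Tendsto (fun i => (σ i : ℂ) * (1 / (Complex.exp (((m : ℂ) + 1) * (σ i + φ i * I)) - 1))) u
      (𝓝 (if orderOf E ∣ m + 1 then r / ((m : ℂ) + 1) else 0)) := by
    intro m
    have he : ∀ i, Complex.exp (((m : ℂ) + 1) * (σ i + φ i * I)) = E ^ (m + 1) * Complex.exp (((m : ℂ) + 1) * (σ i + ψ i * I)) := by
      intro i
      rw [hE, ← Complex.exp_nat_mul, ← Complex.exp_add]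
      congr 1
      simp only [hψ]; push_cast; ring
    have hm : (m : ℂ) + 1 ≠ 0 := by exact_mod_cast Nat.succ_ne_zero m
    simp only [he]
    split_ifs with hd
    · rw [orderOf_dvd_iff_pow_eq_one] at hd
      simp only [hd, one_mul]
      have h1 := hr.mul (exp_div_lim hv hv0 hm)
      rw [← div_eq_mul_one_div] at h1
      refine h1.congr' ?_
      filter_upwards [hv0] with i hi
      field_simp
    · rw [orderOf_dvd_iff_pow_eq_one] at hd
      have h1 : Tendsto (fun i => Complex.exp (((m : ℂ) + 1) * (σ i + ψ i * I))) u (𝓝 1) := by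
        have := (Complex.continuous_exp.tendsto _).comp (hv.const_mul ((m : ℂ) + 1))
        simpa [Function.comp_def] using this
      have h2 : Tendsto (fun i => E ^ (m + 1) * Complex.exp (((m : ℂ) + 1) * (σ i + ψ i * I)) - 1) u (𝓝 (E ^ (m + 1) - 1)) := by
        simpa using (h1.const_mul (E ^ (m + 1))).sub_const 1
      have h3 := hσn.mul (h2.inv₀ (sub_ne_zero.2 hd))
      simpa using h3
  obtain ⟨ρ, hρ1, hρ2⟩ := exists_between hz
  have hT : Tendsto (fun i => (σ i : ℂ) * Lam (ζ i) (σ i + φ i * I)) u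
      (𝓝 (∑' m : ℕ, z ^ (m + 1) / ((m : ℂ) + 1) * (if orderOf E ∣ m + 1 then r / ((m : ℂ) + 1) else 0))) := by
    have hρ0 : 0 ≤ ρ := (norm_nonneg z).trans hρ1.le
    simp only [Lam, ← tsum_mul_left]
    refine tendsto_tsum_of_dominated_convergence (bound := fun m : ℕ => ρ ^ m)
      (summable_geometric_of_lt_one hρ0 hρ2) ?_ ?_
    · intro m
      have := ((hζ.pow (m + 1)).div_const ((m : ℂ) + 1)).mul (hc m)
      refine this.congr fun i => ?_
      ring
    · filter_upwards [hσ, hζ.norm.eventually_lt_const hρ1] with i hi hi2 m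
      have hw : 0 < ((σ i : ℂ) + φ i * I).re := by simpa using hi
      have h1 := Lam_term_bound (ζ i) hw m
      have h2 : ((σ i : ℂ) + φ i * I).re = σ i := by simp
      rw [h2] at h1
      rw [norm_mul, Complex.norm_real, Real.norm_of_nonneg hi.le]
      calc _ ≤ σ i * (‖ζ i‖ ^ (m + 1) / (((m : ℝ) + 1) ^ 2 * σ i)) := by gcongr
        _ = ‖ζ i‖ ^ (m + 1) / ((m : ℝ) + 1) ^ 2 := by field_simp
        _ ≤ ‖ζ i‖ ^ (m + 1) := by
          apply div_le_self (by positivity)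
          have : (0:ℝ) ≤ m := by positivity
          nlinarith
        _ ≤ ρ ^ (m + 1) := by gcongr
        _ ≤ ρ ^ m := pow_le_pow_of_le_one hρ0 hρ2.le (by omega)
  refine ⟨_, hT, ?_⟩
  rcases Nat.eq_zero_or_pos (orderOf E) with h0 | h0
  · left
    rw [h0]
    simp
  · rw [(sub_sum hz h0).tsum_eq]
    rcases Nat.lt_or_ge (orderOf E) 2 with h1 | h1
    · right; right
      have h2 : orderOf E = 1 := by omega
      rw [h2]
      rw [orderOf_eq_one_iff, hE, Complex.exp_eq_one_iff] at h2
      obtain ⟨n, hn⟩ := h2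
      have hn2 : θ = n * (2 * Real.pi) := by
        have h3 : ((θ : ℂ)) * I = ((n * (2 * Real.pi) : ℝ) : ℂ) * I := by rw [hn]; push_cast; ring
        exact_mod_cast mul_right_cancel₀ I_ne_zero h3
      have hn0 : n = 0 := by
        have hp := Real.pi_pos
        have a1 : (n : ℝ) < 1 := by
          by_contra h; push Not at h
          nlinarith [hθ.2]
        have a2 : (-1 : ℝ) < n := by
          by_contra h; push Not at h
          nlinarith [hθ.1]
        have a1 : n < 1 := by exact_mod_cast a1
        have a2 : -1 < n := by exact_mod_cast a2
        omega
      have hθ0 : θ = 0 := by rw [hn2, hn0]; simp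
      have hrε : ‖r‖ ≤ ε := by
        refine le_of_tendsto hr.norm ?_
        filter_upwards [hσ, hε] with i hi hi2
        have e1 : ψ i = φ i := by simp [hψ, hθ0]
        rw [e1, norm_div, Complex.norm_real, Real.norm_of_nonneg hi.le]
        have h5 : |φ i| ≤ ‖(σ i : ℂ) + φ i * I‖ := by
          have := Complex.abs_im_le_norm ((σ i : ℂ) + φ i * I)
          simpa using this
        have h6 : 0 < |φ i| := by
          rcases (abs_nonneg (φ i)).lt_or_eq with h | h
          · exact h
          · rw [← h] at hi2; linarith
        have h7 : 0 < ε := by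
          by_contra h; push Not at h
          nlinarith
        rw [div_le_iff₀ (by linarith)]
        nlinarith
      refine (Complex.re_le_norm _).trans ?_
      simp only [Nat.cast_one, one_pow, div_one, pow_one, norm_mul]
      gcongr
    · right; left
      refine ⟨orderOf E, h1, ?_⟩
      rw [fk_sq]
      have := re_half_lim hσ hr (dilog (z ^ orderOf E))
      have e : (r * dilog (z ^ orderOf E) / (orderOf E : ℂ) ^ 2).re = (r * dilog (z ^ orderOf E)).re / (orderOf E : ℝ) ^ 2 := by
        rw [← Complex.ofReal_natCast, ← Complex.ofReal_pow, Complex.div_ofReal_re]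
      rw [e, ← div_div]
      gcongr

lemma minor_bound {z : ℂ} (hz : z ∈ interior R1) : ∃ ε > 0, ∃ T < fk 1 z ^ 2,
    ∀ {ι : Type} (l : Filter ι) (σ : ι → ℝ) (ζ : ι → ℂ), Tendsto ζ l (𝓝 z) → (∀ᶠ i in l, 0 < σ i) →
      Tendsto σ l (𝓝 0) → ∀ᶠ i in l, ∀ φ ∈ Set.Icc (-Real.pi) Real.pi, σ i ≤ ε * |φ| →
        ((σ i : ℂ) * Lam (ζ i) (σ i + φ * I)).re < T := by
  have hz1 : ‖z‖ < 1 := (interior_subset hz).1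
  have hf := f1_pos hz
  obtain ⟨c, hc1, hc2⟩ : ∃ c < fk 1 z ^ 2, ∀ k ≥ 2, fk k z ^ 2 ≤ c := by
    obtain ⟨N, hN⟩ := exists_nat_gt (4 * 1.645 / fk 1 z ^ 2)
    have hmax : ∀ M : ℕ, ∃ c < fk 1 z ^ 2, ∀ k ≥ 2, k < M → fk k z ^ 2 ≤ c := by
      intro M
      induction M with
      | zero => exact ⟨0, by positivity, fun k _ h => by omega⟩
      | succ M ih =>
        obtain ⟨c, h1, h2⟩ := ih
        by_cases hM : 2 ≤ M
        · refine ⟨max c (fk M z ^ 2), max_lt h1 ?_, fun k hk hk2 => ?_⟩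
          · have := fk_lt hz hM
            have h0 := fk_nonneg M z
            gcongr
          · rcases Nat.lt_succ_iff_lt_or_eq.1 hk2 with h | h
            · exact (h2 k hk h).trans (le_max_left _ _)
            · rw [h]; exact le_max_right _ _
        · exact ⟨c, h1, fun k _ h => by omega⟩
    obtain ⟨c, h1, h2⟩ := hmax (N + 1)
    refine ⟨max c (fk 1 z ^ 2 / 2), max_lt h1 (by nlinarith [sq_pos_of_pos hf]), fun k hk => ?_⟩
    by_cases hkN : k < N + 1
    · exact (h2 k hk hkN).trans (le_max_left _ _)
    · refine le_trans ?_ (le_max_right _ _)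
      have h3 := fk_sq_upper hz1 (k := k) (by omega)
      have h4 : ‖z‖ ^ k ≤ 1 := pow_le_one₀ (norm_nonneg _) hz1.le
      have hk1 : (N : ℝ) ≤ k := by exact_mod_cast (by omega : N ≤ k)
      have hk2 : (2 : ℝ) ≤ k := by exact_mod_cast hk
      have hp := sq_pos_of_pos hf
      rw [div_lt_iff₀ hp] at hN
      refine h3.trans ?_
      rw [div_le_iff₀ (by positivity)]
      nlinarith [mul_le_mul_of_nonneg_right hk1 hp.le, mul_le_mul_of_nonneg_right hk2 hp.le, mul_nonneg hp.le (by positivity : (0:ℝ) ≤ k)]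
  obtain ⟨T, hT1, hT2⟩ := exists_between (max_lt hc1 (by nlinarith [sq_pos_of_pos hf] : fk 1 z ^ 2 / 2 < fk 1 z ^ 2))
  have hp := sq_pos_of_pos hf
  have hd : 0 < ‖dilog z‖ + 1 := by positivity
  refine ⟨fk 1 z ^ 2 / 2 / (‖dilog z‖ + 1), by positivity, T, hT2, ?_⟩
  intro ι l σ ζ hζ hσ hσ0
  by_contra hcon
  rw [not_eventually] at hcon
  push Not at hcon
  set S := {i | ∃ φ ∈ Set.Icc (-Real.pi) Real.pi, σ i ≤ fk 1 z ^ 2 / 2 / (‖dilog z‖ + 1) * |φ| ∧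
    T ≤ ((σ i : ℂ) * Lam (ζ i) (σ i + φ * I)).re} with hS
  have hne : (l ⊓ 𝓟 S).NeBot := frequently_mem_iff_neBot.1 hcon
  set u := Ultrafilter.of (l ⊓ 𝓟 S)
  have hu : (u : Filter ι) ≤ l ⊓ 𝓟 S := Ultrafilter.of_le _
  have hul : (u : Filter ι) ≤ l := hu.trans inf_le_left
  have huS : ∀ᶠ i in (u : Filter ι), i ∈ S := hu.trans inf_le_right (mem_principal_self S)
  have hch : ∀ i, ∃ φ : ℝ, i ∈ S → φ ∈ Set.Icc (-Real.pi) Real.pi ∧ σ i ≤ fk 1 z ^ 2 / 2 / (‖dilog z‖ + 1) * |φ| ∧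
    T ≤ ((σ i : ℂ) * Lam (ζ i) (σ i + φ * I)).re := by
    intro i
    by_cases h : i ∈ S
    · obtain ⟨φ, h1, h2⟩ := h
      exact ⟨φ, fun _ => ⟨h1, h2⟩⟩
    · exact ⟨0, fun h' => absurd h' h⟩
  choose φ hφ using hch
  obtain ⟨L, hL, hL2⟩ := minor_limit u hz1 (hζ.mono_left hul) (hul hσ) (hσ0.mono_left hul)
    (huS.mono fun i hi => (hφ i hi).1) (huS.mono fun i hi => (hφ i hi).2.1)
  have hTL : T ≤ L.re :=
    ge_of_tendsto ((Complex.continuous_re.tendsto _).comp hL) (huS.mono fun i hi => (hφ i hi).2.2)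
  have hT3 := (le_max_left _ _).trans_lt hT1
  have hT4 := (le_max_right _ _).trans_lt hT1
  rcases hL2 with h | ⟨k, hk, h⟩ | h
  · linarith
  · linarith [hc2 k hk]
  · have : fk 1 z ^ 2 / 2 / (‖dilog z‖ + 1) * ‖dilog z‖ ≤ fk 1 z ^ 2 / 2 := by
      rw [div_mul_eq_mul_div, div_le_iff₀ hd]
      nlinarith
    linarith

end

section
open Complex Filter MeasureTheory Topology

noncomputable def hh (u : ℂ) : ℂ := 1 / (Complex.exp u - 1) - 1 / u

lemma hh_bound {u : ℂ} {A : ℝ} (hu : 0 < u.re) (hA : ‖u‖ ≤ A * u.re) : ‖hh u‖ ≤ A + 1 := by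
  have h0 : u ≠ 0 := by rintro rfl; simp at hu
  have hp : 0 < ‖u‖ := norm_pos_iff.2 h0
  have h1 := exp_sub_one_lower hu
  have h2 := exp_sub_one_ne hu
  have hp2 : 0 < ‖Complex.exp u - 1‖ := norm_pos_iff.2 h2
  have hA0 : 0 ≤ A := by
    by_contra h; push Not at h; nlinarith
  have h4 : ‖u‖ ≤ A * ‖Complex.exp u - 1‖ := hA.trans (by gcongr)
  rcases le_total ‖u‖ 1 with h | h
  · have e : hh u = -(Complex.exp u - 1 - u) / ((Complex.exp u - 1) * u) := by
      rw [hh]; field_simp; ring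
    have h3 := Complex.norm_exp_sub_one_sub_id_le h
    rw [e, norm_div, norm_neg, norm_mul]
    rw [div_le_iff₀ (by positivity)]
    nlinarith [mul_pos hp2 hp]
  · rw [hh]
    refine (norm_sub_le _ _).trans ?_
    rw [norm_div, norm_div, norm_one]
    refine add_le_add ?_ ?_
    · rw [div_le_iff₀ hp2]; linarith
    · rw [div_le_iff₀ hp]; linarith

lemma hh_lim {ι : Type*} {l : Filter ι} {v : ι → ℂ} (hv : Tendsto v l (𝓝 0)) (h0 : ∀ᶠ i in l, v i ≠ 0) :
    Tendsto (fun i => hh (v i)) l (𝓝 (-(1/2))) := by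
  have h1 := exp_div_lim hv h0 (m := 1) one_ne_zero
  simp only [one_mul] at h1
  have h2 : Tendsto (fun i => (Complex.exp (v i) - 1 - v i - v i ^ 2 / 2) / v i ^ 2) l (𝓝 0) := by
    have hb : Tendsto (fun i => ‖v i‖ * Real.exp ‖v i‖) l (𝓝 0) := by
      have h3 : Tendsto (fun i => ‖v i‖) l (𝓝 0) := by simpa using hv.norm
      simpa [Function.comp_def] using h3.mul ((Real.continuous_exp.tendsto _).comp h3)
    refine squeeze_zero_norm' ?_ hb
    filter_upwards [h0] with i hi
    have h3 := Complex.norm_exp_sub_sum_le_norm_mul_exp (v i) 3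
    have h4 : ∑ m ∈ Finset.range 3, v i ^ m / (m.factorial : ℂ) = 1 + v i + v i ^ 2 / 2 := by
      simp [Finset.sum_range_succ]
    rw [h4] at h3
    have hp : 0 < ‖v i‖ := norm_pos_iff.2 hi
    rw [norm_div, norm_pow, div_le_iff₀ (by positivity)]
    calc _ = ‖Complex.exp (v i) - (1 + v i + v i ^ 2 / 2)‖ := by congr 1; ring
      _ ≤ _ := h3
      _ = _ := by ring
  have h3 := ((h2.add_const (1/2)).neg).mul h1
  have e : -(0 + 1 / 2) * (1 / 1 : ℂ) = -(1/2) := by norm_num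
  rw [e] at h3
  refine h3.congr' ?_
  have h5 : ∀ᶠ i in l, Complex.exp (v i) - 1 ≠ 0 := by
    have := h1.eventually_ne (b₂ := 0) (by norm_num)
    filter_upwards [this] with i hi h
    rw [h] at hi; simp at hi
  filter_upwards [h0, h5] with i hi hi5
  rw [hh]; field_simp; ring

noncomputable def gg (z w : ℂ) : ℂ := Lam z w - dilog z / w

lemma Lam_summable {z w : ℂ} (hz : ‖z‖ < 1) (hw : 0 < w.re) : Summable (fun m : ℕ =>
    z ^ (m + 1) / ((m : ℂ) + 1) * (1 / (Complex.exp (((m : ℂ) + 1) * w) - 1))) := by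
  refine Summable.of_norm_bounded (g := fun m : ℕ => ‖z‖ * (1 / ((m : ℝ) + 1) ^ 2) / w.re) ((dl_summ.mul_left _).div_const _) fun m => ?_
  refine (Lam_term_bound z hw m).trans ?_
  rw [mul_one_div, div_div]
  gcongr
  exact pow_le_of_le_one (norm_nonneg _) hz.le (by omega)

lemma gg_hasSum {z w : ℂ} (hz : ‖z‖ < 1) (hw : 0 < w.re) : HasSum (fun m : ℕ =>
    z ^ (m + 1) / ((m : ℂ) + 1) * hh (((m : ℂ) + 1) * w)) (gg z w) := by
  have h0 : w ≠ 0 := by rintro rfl; simp at hw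
  refine ((Lam_summable hz hw).hasSum.sub ((dl_hasSum hz.le).div_const w)).congr_fun fun m => ?_
  have hm : (m : ℂ) + 1 ≠ 0 := by exact_mod_cast Nat.succ_ne_zero m
  rw [hh, mul_sub]
  congr 1
  field_simp

lemma gg_term {z w : ℂ} {A ρ : ℝ} (hz : ‖z‖ ≤ ρ) (hρ : ρ < 1) (hw : 0 < w.re) (hA : ‖w‖ ≤ A * w.re) (m : ℕ) :
    ‖z ^ (m + 1) / ((m : ℂ) + 1) * hh (((m : ℂ) + 1) * w)‖ ≤ ρ ^ m * (A + 1) := by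
  have hρ0 : 0 ≤ ρ := (norm_nonneg z).trans hz
  have h1 := hh_bound (u := ((m : ℂ) + 1) * w) (A := A) (by rw [re_mul_nat]; positivity) (by
    rw [re_mul_nat, norm_mul, norm_nat1]
    have : (0:ℝ) ≤ (m:ℝ) + 1 := by positivity
    nlinarith)
  rw [norm_mul, norm_div, norm_nat1, norm_pow]
  refine mul_le_mul ?_ h1 (norm_nonneg _) (by positivity)
  calc _ ≤ ‖z‖ ^ (m + 1) := div_le_self (by positivity) (by have : (0:ℝ) ≤ m := by positivity
                                                            linarith)
    _ ≤ ρ ^ (m + 1) := by gcongr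
    _ ≤ ρ ^ m := pow_le_pow_of_le_one hρ0 hρ.le (by omega)

lemma gg_bound {z w : ℂ} {A ρ : ℝ} (hz : ‖z‖ ≤ ρ) (hρ : ρ < 1) (hw : 0 < w.re) (hA : ‖w‖ ≤ A * w.re) :
    ‖gg z w‖ ≤ (1 - ρ)⁻¹ * (A + 1) := by
  have hρ0 : 0 ≤ ρ := (norm_nonneg z).trans hz
  rw [← (gg_hasSum (hz.trans_lt hρ) hw).tsum_eq]
  exact tsum_of_norm_bounded ((hasSum_geometric_of_lt_one hρ0 hρ).mul_right _) (gg_term hz hρ hw hA)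

noncomputable def gz (z : ℂ) : ℂ := ∑' m : ℕ, z ^ (m + 1) / ((m : ℂ) + 1) * (-(1/2))

lemma gg_lim {ι : Type*} {l : Filter ι} {ζ w : ι → ℂ} {z : ℂ} (hz : ‖z‖ < 1) (hζ : Tendsto ζ l (𝓝 z))
    (hw : Tendsto w l (𝓝 0)) (hw0 : ∀ᶠ i in l, 0 < (w i).re) {A : ℝ} (hA : ∀ᶠ i in l, ‖w i‖ ≤ A * (w i).re) :
    Tendsto (fun i => gg (ζ i) (w i)) l (𝓝 (gz z)) := by
  obtain ⟨ρ, hρ1, hρ2⟩ := exists_between hz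
  have hρ0 : 0 ≤ ρ := (norm_nonneg z).trans hρ1.le
  have h1 : Tendsto (fun i => ∑' m : ℕ, ζ i ^ (m + 1) / ((m : ℂ) + 1) * hh (((m : ℂ) + 1) * w i)) l (𝓝 (gz z)) := by
    refine tendsto_tsum_of_dominated_convergence (bound := fun m : ℕ => ρ ^ m * (A + 1))
      ((summable_geometric_of_lt_one hρ0 hρ2).mul_right _) ?_ ?_
    · intro m
      refine ((hζ.pow (m + 1)).div_const ((m : ℂ) + 1)).mul (hh_lim ?_ ?_)
      · simpa using hw.const_mul ((m : ℂ) + 1)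
      · filter_upwards [hw0] with i hi
        have hm : (m : ℂ) + 1 ≠ 0 := by exact_mod_cast Nat.succ_ne_zero m
        refine mul_ne_zero hm ?_
        intro h; rw [h] at hi; simp at hi
    · filter_upwards [hw0, hA, hζ.norm.eventually_lt_const hρ1] with i hi hi2 hi3 m
      exact gg_term hi3.le hρ2 hi hi2 m
  refine h1.congr' ?_
  filter_upwards [hw0, hζ.norm.eventually_lt_const hz] with i hi hi3
  exact (gg_hasSum hi3 hi).tsum_eq

lemma Lam_cont {z : ℂ} (hz : ‖z‖ < 1) {σ : ℝ} (hσ : 0 < σ) : Continuous (fun φ : ℝ => Lam z (σ + φ * I)) := by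
  unfold Lam
  have hw : ∀ φ : ℝ, ((σ : ℂ) + φ * I).re = σ := by intro φ; simp
  refine continuous_tsum (u := fun m : ℕ => ‖z‖ * (1 / ((m : ℝ) + 1) ^ 2) / σ) ?_ ((dl_summ.mul_left _).div_const _) ?_
  · intro m
    refine continuous_const.mul (continuous_const.div (by fun_prop) fun φ => ?_)
    apply exp_sub_one_ne
    rw [re_mul_nat, hw]; positivity
  · intro m φ
    refine (Lam_term_bound z (by rw [hw]; exact hσ) m).trans ?_
    rw [hw, mul_one_div, div_div]
    gcongr
    exact pow_le_of_le_one (norm_nonneg _) hz.le (by omega)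

/-- normalized integrand -/
noncomputable def Phi (z : ℂ) (s φ : ℝ) : ℂ :=
  Complex.exp (Lam z ((((uk 1 z).re / s : ℝ) : ℂ) + φ * I) + s ^ 2 * ((((uk 1 z).re / s : ℝ) : ℂ) + φ * I) - 2 * s * uk 1 z)

lemma Phi_cont {z : ℂ} (hz : ‖z‖ < 1) {s : ℝ} (hs : 0 < s) (h : 0 < (uk 1 z).re) : Continuous (Phi z s) := by
  unfold Phi
  have := Lam_cont hz (div_pos h hs)
  fun_prop

lemma Phi_eq {z : ℂ} {s : ℝ} (hs : 0 < s) (h : 0 < (uk 1 z).re) (v : ℝ) :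
    Phi z s (((uk 1 z).im + v / √s) / s) =
      Complex.exp (gg z ((((uk 1 z).re / s : ℝ) : ℂ) + ((((uk 1 z).im + v / √s) / s : ℝ) : ℂ) * I)
        - v ^ 2 / (uk 1 z + (v / √s : ℝ) * I)) := by
  set t := uk 1 z with ht
  have hsq : t ^ 2 = dilog z := by rw [ht, uk_sq]; simp
  have hs0 : (s : ℂ) ≠ 0 := by exact_mod_cast hs.ne'
  set x : ℝ := v / √s with hx
  have e1 : (((t.re / s : ℝ) : ℂ) + (((t.im + x) / s : ℝ) : ℂ) * I) = (t + x * I) / s := by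
    conv_rhs => rw [← Complex.re_add_im t]
    push_cast; field_simp; ring
  have h0 : t + x * I ≠ 0 := by
    intro h'
    have := congrArg Complex.re h'
    simp at this; linarith
  have hv : (v : ℂ) ^ 2 = s * x ^ 2 := by
    have : v ^ 2 = s * x ^ 2 := by
      rw [hx, div_pow, Real.sq_sqrt hs.le]; field_simp
    exact_mod_cast this
  unfold Phi gg
  rw [← ht, e1]
  congr 1
  rw [hv, ← hsq]
  have hI : I ^ 2 = -1 := I_sq
  field_simp
  linear_combination ((s:ℂ) * x ^ 2) * hI

end

section
open Complex Filter MeasureTheory Topology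

lemma norm_add_I_le {a y B A c : ℝ} (hc : 0 < c) (hA : 0 ≤ B) (ha : c ≤ a) (hy : |y| ≤ B) (hAB : A = 1 + B / c) :
    ‖(a : ℂ) + y * I‖ ≤ A * a := by
  have h0 : 0 < a := by linarith
  refine (norm_add_le _ _).trans ?_
  rw [norm_mul, norm_I, mul_one, Complex.norm_real, Complex.norm_real, Real.norm_of_nonneg h0.le, Real.norm_eq_abs, hAB]
  have : B ≤ B / c * a := by
    rw [div_mul_eq_mul_div, le_div_iff₀ hc]; nlinarith
  nlinarith

lemma re_inv_lower {a y B c d : ℝ} (hc : 0 < c) (ha : c ≤ a) (had : a ≤ d) (hy : |y| ≤ B) :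
    c / (d ^ 2 + B ^ 2) ≤ (1 / ((a : ℂ) + y * I)).re := by
  have h0 : 0 < a := by linarith
  have e : (1 / ((a : ℂ) + y * I)).re = a / (a ^ 2 + y ^ 2) := by
    rw [one_div, Complex.inv_re, Complex.normSq_apply]
    simp [sq]
  rw [e]
  have hy2 : y ^ 2 ≤ B ^ 2 := sq_le_sq' (abs_le.1 hy).1 (abs_le.1 hy).2
  gcongr

lemma major_limit {ι : Type} {l : Filter ι} [l.IsCountablyGenerated] {s : ι → ℝ} {ζ : ι → ℂ} {z : ℂ}
    (hz : z ∈ interior R1) (hζ : Tendsto ζ l (𝓝 z)) (hs : Tendsto s l atTop) {B : ℝ} (hB : |(uk 1 z).im| < B) :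
    Tendsto (fun i => ∫ v : ℝ, Set.indicator {v : ℝ | |(uk 1 (ζ i)).im + v / √(s i)| ≤ B}
      (fun v => Phi (ζ i) (s i) (((uk 1 (ζ i)).im + v / √(s i)) / s i)) v) l
      (𝓝 (∫ v : ℝ, Complex.exp (gz z - v ^ 2 / uk 1 z))) := by
  have hz1 : ‖z‖ < 1 := (interior_subset hz).1
  have hf := f1_pos hz
  have hB0 : 0 ≤ B := (abs_nonneg _).trans hB.le
  have hcu : ContinuousAt (uk 1) z := (uk_analyticAt one_ne_zero hz1 hf).continuousAt
  have hu : Tendsto (fun i => uk 1 (ζ i)) l (𝓝 (uk 1 z)) := hcu.tendsto.comp hζ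
  have hur : Tendsto (fun i => (uk 1 (ζ i)).re) l (𝓝 (uk 1 z).re) := (Complex.continuous_re.tendsto _).comp hu
  have hui : Tendsto (fun i => (uk 1 (ζ i)).im) l (𝓝 (uk 1 z).im) := (Complex.continuous_im.tendsto _).comp hu
  have hpos : 0 < (uk 1 z).re := by rw [uk_re]; exact hf
  obtain ⟨c, hc0, hc⟩ := exists_between hpos
  obtain ⟨d, hd⟩ := exists_gt (uk 1 z).re
  obtain ⟨ρ, hρ1, hρ2⟩ := exists_between hz1
  have ev1 : ∀ᶠ i in l, c ≤ (uk 1 (ζ i)).re ∧ (uk 1 (ζ i)).re ≤ d ∧ ‖ζ i‖ ≤ ρ ∧ 0 < s i := by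
    filter_upwards [hur.eventually_const_lt hc, hur.eventually_lt_const hd, hζ.norm.eventually_lt_const hρ1,
      hs.eventually_gt_atTop 0] with i h1 h2 h3 h4
    exact ⟨h1.le, h2.le, h3.le, h4⟩
  have hcone : ∀ i, c ≤ (uk 1 (ζ i)).re → 0 < s i → ∀ y : ℝ, |y| ≤ B →
      ‖((((uk 1 (ζ i)).re / s i : ℝ) : ℂ) + ((y / s i : ℝ) : ℂ) * I)‖ ≤ (1 + B / c) *
        ((((uk 1 (ζ i)).re / s i : ℝ) : ℂ) + ((y / s i : ℝ) : ℂ) * I).re := by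
    intro i h1 h2 y hy
    have h3 := norm_add_I_le hc0 hB0 h1 hy rfl
    have e : ((((uk 1 (ζ i)).re / s i : ℝ) : ℂ) + ((y / s i : ℝ) : ℂ) * I) = (((uk 1 (ζ i)).re : ℂ) + y * I) / s i := by
      push_cast; ring
    have e2 : ((((uk 1 (ζ i)).re / s i : ℝ) : ℂ) + ((y / s i : ℝ) : ℂ) * I).re = (uk 1 (ζ i)).re / s i := by simp
    rw [e2, e, norm_div, Complex.norm_real, Real.norm_of_nonneg h2.le, ← mul_div_assoc]
    gcongr
  have hspl : ∀ i (x : ℝ), uk 1 (ζ i) + (x : ℂ) * I = (((uk 1 (ζ i)).re : ℝ) : ℂ) + (((uk 1 (ζ i)).im + x : ℝ) : ℂ) * I := by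
    intro i x
    conv_lhs => rw [← Complex.re_add_im (uk 1 (ζ i))]
    push_cast; ring
  refine tendsto_integral_filter_of_dominated_convergence
    (fun v => Real.exp ((1 - ρ)⁻¹ * ((1 + B / c) + 1)) * Real.exp (-(c / (d ^ 2 + B ^ 2)) * v ^ 2)) ?_ ?_ ?_ ?_
  · filter_upwards [ev1] with i hi
    have h1 := Phi_cont (hi.2.2.1.trans_lt hρ2) hi.2.2.2 (hc0.trans_le hi.1)
    refine AEStronglyMeasurable.indicator ?_ ?_
    · exact (by fun_prop : Continuous _).aestronglyMeasurable
    · exact measurableSet_le (by fun_prop) (by fun_prop)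
  · filter_upwards [ev1] with i hi
    refine Eventually.of_forall fun v => ?_
    by_cases hv : v ∈ {v : ℝ | |(uk 1 (ζ i)).im + v / √(s i)| ≤ B}
    · rw [Set.indicator_of_mem hv]
      have hv : |(uk 1 (ζ i)).im + v / √(s i)| ≤ B := hv
      rw [Phi_eq hi.2.2.2 (hc0.trans_le hi.1), Complex.norm_exp, ← Real.exp_add]
      apply Real.exp_le_exp.2
      rw [Complex.sub_re, sub_eq_add_neg]
      refine add_le_add ?_ ?_
      · refine (Complex.re_le_norm _).trans (gg_bound hi.2.2.1 hρ2 ?_ (hcone i hi.1 hi.2.2.2 _ hv))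
        have : 0 < (uk 1 (ζ i)).re / s i := div_pos (hc0.trans_le hi.1) hi.2.2.2
        simpa using this
      · have h3 := re_inv_lower hc0 hi.1 hi.2.1 hv
        have e : ((v : ℂ) ^ 2 / (uk 1 (ζ i) + ((v / √(s i) : ℝ) : ℂ) * I)).re = v ^ 2 * (1 / (uk 1 (ζ i) + ((v / √(s i) : ℝ) : ℂ) * I)).re := by
          rw [div_eq_mul_one_div, ← Complex.ofReal_pow, Complex.re_ofReal_mul]
        rw [e, hspl]
        nlinarith [mul_le_mul_of_nonneg_left h3 (sq_nonneg v)]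
    · rw [Set.indicator_of_notMem hv, norm_zero]; positivity
  · refine (integrable_exp_neg_mul_sq ?_).const_mul _
    have : 0 < d := by linarith
    positivity
  · refine Eventually.of_forall fun v => ?_
    have hx : Tendsto (fun i => v / √(s i)) l (𝓝 0) :=
      (Real.tendsto_sqrt_atTop.comp hs).const_div_atTop v
    have hy : Tendsto (fun i => (uk 1 (ζ i)).im + v / √(s i)) l (𝓝 (uk 1 z).im) := by simpa using hui.add hx
    have hyB : ∀ᶠ i in l, |(uk 1 (ζ i)).im + v / √(s i)| ≤ B := (hy.abs.eventually_lt_const hB).mono fun i hi => hi.le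
    have hxn : Tendsto (fun i => ((v / √(s i) : ℝ) : ℂ)) l (𝓝 0) := by
      simpa [Function.comp_def] using (Complex.continuous_ofReal.tendsto _).comp hx
    have hw1 : Tendsto (fun i => (((uk 1 (ζ i)).re / s i : ℝ) : ℂ)) l (𝓝 0) := by
      simpa [Function.comp_def] using (Complex.continuous_ofReal.tendsto _).comp (hur.div_atTop hs)
    have hw2 : Tendsto (fun i => ((((uk 1 (ζ i)).im + v / √(s i)) / s i : ℝ) : ℂ)) l (𝓝 0) := by
      simpa [Function.comp_def] using (Complex.continuous_ofReal.tendsto _).comp (hy.div_atTop hs)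
    have hw : Tendsto (fun i => (((uk 1 (ζ i)).re / s i : ℝ) : ℂ) + ((((uk 1 (ζ i)).im + v / √(s i)) / s i : ℝ) : ℂ) * I) l (𝓝 0) := by
      simpa using hw1.add (hw2.mul_const I)
    have hG := gg_lim hz1 hζ hw (by
        filter_upwards [ev1] with i hi
        have : 0 < (uk 1 (ζ i)).re / s i := div_pos (hc0.trans_le hi.1) hi.2.2.2
        simpa using this) (A := 1 + B / c) (by
        filter_upwards [ev1, hyB] with i hi hi2
        exact hcone i hi.1 hi.2.2.2 _ hi2)
    have hne : uk 1 z ≠ 0 := by intro h; rw [h] at hpos; simp at hpos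
    have hden : Tendsto (fun i => uk 1 (ζ i) + ((v / √(s i) : ℝ) : ℂ) * I) l (𝓝 (uk 1 z)) := by
      simpa using hu.add (hxn.mul_const I)
    have hfin := (Complex.continuous_exp.tendsto _).comp (hG.sub ((tendsto_const_nhds (x := (v : ℂ) ^ 2)).div hden hne))
    refine hfin.congr' ?_
    filter_upwards [ev1, hyB] with i hi hi2
    rw [Set.indicator_of_mem (by exact hi2), Phi_eq hi.2.2.2 (hc0.trans_le hi.1)]
    rfl

lemma gauss_ne {z : ℂ} (h : 0 < (uk 1 z).re) : ∫ v : ℝ, Complex.exp (gz z - v ^ 2 / uk 1 z) ≠ 0 := by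
  have hb : 0 < (1 / uk 1 z).re := by
    have hne : uk 1 z ≠ 0 := by intro h'; rw [h'] at h; simp at h
    rw [one_div, Complex.inv_re]
    exact div_pos h (Complex.normSq_pos.2 hne)
  have e : ∀ v : ℝ, Complex.exp (gz z - v ^ 2 / uk 1 z) = Complex.exp (gz z) * Complex.exp (-(1 / uk 1 z) * (v : ℂ) ^ 2) := by
    intro v
    rw [← Complex.exp_add]; congr 1; ring
  simp only [e]
  rw [integral_const_mul, integral_gaussian_complex hb]
  refine mul_ne_zero (Complex.exp_ne_zero _) ?_
  rw [Complex.cpow_def_of_ne_zero]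
  · exact Complex.exp_ne_zero _
  · refine div_ne_zero (by exact_mod_cast Real.pi_ne_zero) ?_
    intro h'; rw [h'] at hb; simp at hb

end

section
open Complex Filter MeasureTheory Topology

lemma Phi_integral {n : ℕ} (hn : 1 ≤ n) {z : ℂ} (hz : ‖z‖ < 1) (h : 0 < (uk 1 z).re) :
    ∫ φ in (-Real.pi)..Real.pi, Phi z (√n) φ = 2 * Real.pi * F n z * Complex.exp (-(2 * (√n : ℝ) * uk 1 z)) := by
  have hs : 0 < √(n : ℝ) := Real.sqrt_pos.2 (by exact_mod_cast hn)
  rw [← F_integral hn hz (div_pos h hs), ← intervalIntegral.integral_mul_const]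
  refine intervalIntegral.integral_congr fun φ _ => ?_
  simp only [Phi]
  have e : (((√(n:ℝ) : ℝ)) : ℂ) ^ 2 = n := by
    rw [← Complex.ofReal_pow, Real.sq_sqrt (by positivity)]; simp
  rw [e, sub_eq_add_neg, Complex.exp_add, Complex.exp_add]

lemma Phi_norm {z : ℂ} {s : ℝ} (hs : 0 < s) (h : 0 < (uk 1 z).re) (φ : ℝ) :
    ‖Phi z s φ‖ = Real.exp (s * (((((uk 1 z).re / s : ℝ) : ℂ) * Lam z ((((uk 1 z).re / s : ℝ) : ℂ) + φ * I)).re / (uk 1 z).re - (uk 1 z).re)) := by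
  rw [Phi, Complex.norm_exp]
  congr 1
  rw [Complex.re_ofReal_mul, Complex.sub_re, Complex.add_re]
  have e1 : ((s : ℂ) ^ 2 * ((((uk 1 z).re / s : ℝ) : ℂ) + φ * I)).re = s * (uk 1 z).re := by
    rw [← Complex.ofReal_pow, Complex.re_ofReal_mul]
    simp only [Complex.add_re, Complex.ofReal_re, Complex.mul_re, Complex.I_re, Complex.I_im, Complex.ofReal_im]
    field_simp
    ring
  have e2 : (2 * (s : ℂ) * uk 1 z).re = 2 * s * (uk 1 z).re := by
    rw [show (2 * (s : ℂ)) = ((2 * s : ℝ) : ℂ) by push_cast; rfl, Complex.re_ofReal_mul]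
  rw [e1, e2]
  field_simp
  ring

lemma major_subst {z : ℂ} {s B : ℝ} (hs : 0 < s) :
    ∫ v : ℝ, Set.indicator {v : ℝ | |(uk 1 z).im + v / √s| ≤ B} (fun v => Phi z s (((uk 1 z).im + v / √s) / s)) v
      = ((s * √s : ℝ) : ℂ) * ∫ φ in {φ : ℝ | |s * φ| ≤ B}, Phi z s φ := by
  have hr : 0 < √s := Real.sqrt_pos.2 hs
  have hm : MeasurableSet {φ : ℝ | |s * φ| ≤ B} := measurableSet_le (by fun_prop) (by fun_prop)
  rw [← integral_indicator hm]
  set b := (uk 1 z).im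
  have h1 := Measure.integral_comp_mul_right (fun x => Set.indicator {φ : ℝ | |s * φ| ≤ B} (Phi z s) (b / s + x)) ((s * √s)⁻¹)
  rw [integral_add_left_eq_self (fun x => Set.indicator {φ : ℝ | |s * φ| ≤ B} (Phi z s) x), inv_inv, abs_of_pos (by positivity), Complex.real_smul] at h1
  rw [← h1]
  refine integral_congr_ae (Eventually.of_forall fun v => ?_)
  have e : b / s + v * (s * √s)⁻¹ = (b + v / √s) / s := by field_simp
  simp only [e]
  have e2 : s * ((b + v / √s) / s) = b + v / √s := by field_simp
  by_cases hv : |b + v / √s| ≤ B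
  · rw [Set.indicator_of_mem (by exact hv), Set.indicator_of_mem (by rw [Set.mem_setOf_eq, e2]; exact hv)]
  · rw [Set.indicator_of_notMem (by exact hv), Set.indicator_of_notMem (by rw [Set.mem_setOf_eq, e2]; exact hv)]

lemma main_lim {ι : Type} {l : Filter ι} [l.IsCountablyGenerated] {N : ι → ℕ} {ζ : ι → ℂ} {z : ℂ}
    (hz : z ∈ interior R1) (hζ : Tendsto ζ l (𝓝 z)) (hN : Tendsto N l atTop) :
    Tendsto (fun i => Real.log ‖F (N i) (ζ i)‖ / (2 * √(N i : ℝ))) l (𝓝 (fk 1 z)) := by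
  have hz1 : ‖z‖ < 1 := (interior_subset hz).1
  have hf := f1_pos hz
  have hcu : ContinuousAt (uk 1) z := (uk_analyticAt one_ne_zero hz1 hf).continuousAt
  have hu : Tendsto (fun i => uk 1 (ζ i)) l (𝓝 (uk 1 z)) := hcu.tendsto.comp hζ
  have hur : Tendsto (fun i => (uk 1 (ζ i)).re) l (𝓝 (uk 1 z).re) := (Complex.continuous_re.tendsto _).comp hu
  have hpos : 0 < (uk 1 z).re := by rw [uk_re]; exact hf
  set s : ι → ℝ := fun i => √(N i : ℝ) with hsdef
  have hs : Tendsto s l atTop := Real.tendsto_sqrt_atTop.comp (tendsto_natCast_atTop_atTop.comp hN)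
  obtain ⟨ε, hε, T, hT, hmin⟩ := minor_bound hz
  rw [← uk_re] at hT
  obtain ⟨B, hB⟩ := exists_gt (max |(uk 1 z).im| ((uk 1 z).re / ε))
  have hB1 := (le_max_left _ _).trans_lt hB
  have hB2 := (le_max_right _ _).trans_lt hB
  have hmaj := major_limit hz hζ hs hB1
  set C := ∫ v : ℝ, Complex.exp (gz z - v ^ 2 / uk 1 z) with hC
  have hC0 : C ≠ 0 := gauss_ne hpos
  have hσ0 : Tendsto (fun i => (uk 1 (ζ i)).re / s i) l (𝓝 0) := hur.div_atTop hs
  have hev : ∀ᶠ i in l, 0 < (uk 1 (ζ i)).re ∧ ‖ζ i‖ < 1 ∧ 1 ≤ s i ∧ 1 ≤ N i ∧ B / s i < Real.pi ∧ (uk 1 (ζ i)).re / ε < B := by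
    filter_upwards [hur.eventually_const_lt hpos, hζ.norm.eventually_lt_const hz1, hs.eventually_ge_atTop 1,
      hN.eventually_ge_atTop 1, (hs.const_div_atTop B).eventually_lt_const Real.pi_pos,
      (hur.div_const ε).eventually_lt_const hB2] with i h1 h2 h3 h4 h5 h6
    exact ⟨h1, h2, h3, h4, h5, h6⟩
  have hmin := hmin l _ ζ hζ (hev.mono fun i hi => div_pos hi.1 (by linarith [hi.2.2.1])) hσ0
  obtain ⟨δ, hδ, hδ0⟩ : ∃ δ, T / (uk 1 z).re - (uk 1 z).re < δ ∧ δ < 0 := by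
    apply exists_between
    rw [sub_neg, div_lt_iff₀ hpos]; nlinarith
  have hdel := ((tendsto_const_nhds (x := T)).div hur hpos.ne').sub hur |>.eventually_lt_const hδ
  -- minor arc integral
  set m : ι → ℂ := fun i => ∫ φ in Set.Ioc (-Real.pi) Real.pi \ {φ : ℝ | |s i * φ| ≤ B}, Phi (ζ i) (s i) φ with hmdef
  have hmb : ∀ᶠ i in l, ‖((s i * √(s i) : ℝ) : ℂ) * m i‖ ≤ 2 * Real.pi * ((s i) ^ (2:ℝ) * Real.exp (-(-δ) * s i)) := by
    filter_upwards [hev, hmin, hdel] with i hi hi2 hi3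
    have hs0 : 0 < s i := by linarith [hi.2.2.1]
    have h1 : ‖m i‖ ≤ Real.exp (δ * s i) * volume.real (Set.Ioc (-Real.pi) Real.pi \ {φ : ℝ | |s i * φ| ≤ B}) := by
      refine norm_setIntegral_le_of_norm_le_const ?_ ?_
      · exact (measure_mono Set.diff_subset).trans_lt measure_Ioc_lt_top
      · intro φ hφ
        rw [Phi_norm hs0 hi.1]
        apply Real.exp_le_exp.2
        rw [mul_comm δ]
        refine mul_le_mul_of_nonneg_left ?_ hs0.le
        have hφB : B < |s i * φ| := by
          have := hφ.2
          simpa using this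
        rw [abs_mul, abs_of_pos hs0] at hφB
        have h5 := hi2 φ ⟨hφ.1.1.le, hφ.1.2⟩ (by
          rw [div_le_iff₀ hs0]
          have := hi.2.2.2.2.2
          rw [div_lt_iff₀ hε] at this
          nlinarith)
        refine le_trans ?_ hi3.le
        simp only [Pi.sub_apply, Pi.div_apply]
        gcongr
        exact hi.1.le
    have h2 : volume.real (Set.Ioc (-Real.pi) Real.pi \ {φ : ℝ | |s i * φ| ≤ B}) ≤ 2 * Real.pi := by
      refine (measureReal_mono Set.diff_subset measure_Ioc_lt_top.ne).trans ?_
      rw [Real.volume_real_Ioc]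
      rw [max_eq_left (by linarith [Real.pi_pos])]
      linarith
    have h3 : s i * √(s i) ≤ s i ^ 2 := by
      have : √(s i) ≤ s i := by
        rw [Real.sqrt_le_left hs0.le]; nlinarith [hi.2.2.1]
      nlinarith
    rw [norm_mul, Complex.norm_real, Real.norm_of_nonneg (by positivity), Real.rpow_two, neg_neg]
    calc _ ≤ s i ^ 2 * (Real.exp (δ * s i) * (2 * Real.pi)) := by
          refine mul_le_mul h3 (h1.trans ?_) (norm_nonneg _) (by positivity)
          gcongr
      _ = _ := by ring
  have hm0 : Tendsto (fun i => ((s i * √(s i) : ℝ) : ℂ) * m i) l (𝓝 0) := by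
    refine squeeze_zero_norm' hmb ?_
    have := ((tendsto_rpow_mul_exp_neg_mul_atTop_nhds_zero 2 (-δ) (by linarith)).comp hs).const_mul (2 * Real.pi)
    simpa [Function.comp_def] using this
  set Q : ι → ℂ := fun i => ((s i * √(s i) : ℝ) : ℂ) * (2 * Real.pi * F (N i) (ζ i) * Complex.exp (-(2 * (s i : ℝ) * uk 1 (ζ i)))) with hQ
  have hQlim : Tendsto Q l (𝓝 C) := by
    have h1 := hmaj.add hm0
    rw [add_zero] at h1
    refine h1.congr' ?_
    filter_upwards [hev] with i hi
    have hs0 : 0 < s i := by linarith [hi.2.2.1]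
    rw [major_subst hs0, ← mul_add]
    simp only [hQ]
    rw [← Phi_integral hi.2.2.2.1 hi.2.1 hi.1, intervalIntegral.integral_of_le (by linarith [Real.pi_pos])]
    congr 1
    have hsub : {φ : ℝ | |s i * φ| ≤ B} ⊆ Set.Ioc (-Real.pi) Real.pi := by
      intro φ hφ
      have hφ : |s i * φ| ≤ B := hφ
      have h5 := hi.2.2.2.2.1
      rw [div_lt_iff₀ hs0] at h5
      rw [abs_mul, abs_of_pos hs0] at hφ
      have h6 : |φ| < Real.pi := by
        by_contra h; push Not at h
        nlinarith
      exact ⟨(abs_lt.1 h6).1, (abs_lt.1 h6).2.le⟩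
    have hInt : IntegrableOn (Phi (ζ i) (s i)) (Set.Ioc (-Real.pi) Real.pi) :=
      (Phi_cont hi.2.1 hs0 hi.1).integrableOn_Ioc
    have hms : MeasurableSet {φ : ℝ | |s i * φ| ≤ B} := measurableSet_le (by fun_prop) (by fun_prop)
    have h7 := integral_inter_add_diff hms hInt
    rw [Set.inter_eq_right.2 hsub] at h7
    exact h7
  have hlogQ : Tendsto (fun i => Real.log ‖Q i‖) l (𝓝 (Real.log ‖C‖)) :=
    hQlim.norm.log (norm_ne_zero_iff.2 hC0)
  have h2s : Tendsto (fun i => 2 * s i) l atTop := hs.const_mul_atTop (by norm_num)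
  have hlogs : Tendsto (fun i => Real.log (s i) / s i) l (𝓝 0) :=
    (Real.isLittleO_log_id_atTop.tendsto_div_nhds_zero).comp hs
  have hfin : Tendsto (fun i => (uk 1 (ζ i)).re + (Real.log ‖Q i‖ - Real.log (2 * Real.pi)) / (2 * s i)
      - 3 / 4 * (Real.log (s i) / s i)) l (𝓝 (fk 1 z)) := by
    have := (hur.add ((hlogQ.sub_const (Real.log (2 * Real.pi))).div_atTop h2s)).sub (hlogs.const_mul (3/4))
    simpa [uk_re] using this
  refine hfin.congr' ?_
  filter_upwards [hev, hQlim.eventually_ne hC0] with i hi hi2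
  have hs0 : 0 < s i := by linarith [hi.2.2.1]
  have hr0 : 0 < √(s i) := Real.sqrt_pos.2 hs0
  have hF0 : ‖F (N i) (ζ i)‖ ≠ 0 := by
    intro h
    apply hi2
    simp only [hQ]
    rw [norm_eq_zero.1 h]; simp
  have hnQ : ‖Q i‖ = (s i * √(s i)) * ((2 * Real.pi) * ‖F (N i) (ζ i)‖ * Real.exp (-(2 * s i * (uk 1 (ζ i)).re))) := by
    simp only [hQ]
    have e2 : (-(2 * (s i : ℂ) * uk 1 (ζ i))).re = -(2 * s i * (uk 1 (ζ i)).re) := by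
      rw [Complex.neg_re, show (2 * (s i : ℂ)) = ((2 * s i : ℝ) : ℂ) by push_cast; rfl, Complex.re_ofReal_mul]
    rw [norm_mul, norm_mul, norm_mul, Complex.norm_exp, e2, Complex.norm_real, Real.norm_of_nonneg (by positivity)]
    congr 3
    rw [show (2 * (Real.pi : ℂ)) = ((2 * Real.pi : ℝ) : ℂ) by push_cast; rfl, Complex.norm_real,
      Real.norm_of_nonneg (by positivity)]
  have hp2 : 2 * Real.pi ≠ 0 := by positivity
  have hlog : Real.log ‖Q i‖ = 3 / 2 * Real.log (s i) + (Real.log (2 * Real.pi) + Real.log ‖F (N i) (ζ i)‖ - 2 * s i * (uk 1 (ζ i)).re) := by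
    rw [hnQ, Real.log_mul (by positivity) (mul_ne_zero (mul_ne_zero hp2 hF0) (Real.exp_pos _).ne'),
      Real.log_mul (mul_ne_zero hp2 hF0) (Real.exp_pos _).ne', Real.log_mul hp2 hF0, Real.log_exp,
      Real.log_mul hs0.ne' hr0.ne', Real.log_sqrt hs0.le]
    ring
  rw [hlog]
  change _ = Real.log ‖F (N i) (ζ i)‖ / (2 * s i)
  field_simp
  ring

theorem main_unif (K : Set ℂ) (hK : K ⊆ interior R1) (hKc : IsCompact K) :
    TendstoUniformlyOn (fun (n : ℕ) (z : ℂ) => Real.log ‖F n z‖ / (2 * Real.sqrt n))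
      (fun z => fk 1 z) atTop K := by
  rw [← tendstoLocallyUniformlyOn_iff_tendstoUniformlyOn_of_compact hKc]
  rw [tendstoLocallyUniformlyOn_iff_forall_tendsto]
  intro z hz
  have hz' := hK hz
  have h1 : Tendsto (fun p : ℕ × ℂ => Real.log ‖F p.1 p.2‖ / (2 * √(p.1 : ℝ))) (atTop ×ˢ 𝓝[K] z) (𝓝 (fk 1 z)) :=
    main_lim (ι := ℕ × ℂ) hz' (tendsto_snd.mono_right nhdsWithin_le_nhds) tendsto_fst
  have hcu : ContinuousAt (uk 1) z := (uk_analyticAt one_ne_zero (interior_subset hz').1 (f1_pos hz')).continuousAt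
  have h2 : Tendsto (fun p : ℕ × ℂ => fk 1 p.2) (atTop ×ˢ 𝓝[K] z) (𝓝 (fk 1 z)) := by
    have h3 := ((Complex.continuous_re.tendsto _).comp hcu.tendsto).comp
      ((tendsto_snd (f := (atTop : Filter ℕ)) (g := 𝓝[K] z)).mono_right nhdsWithin_le_nhds)
    simpa [Function.comp_def, uk_re] using h3
  have h3 := h2.prodMk_nhds h1
  exact h3.mono_right (nhds_le_uniformity _)

end

/-- On region R(1): uniformly on compact subsets of the interior of R(1),
ln|Fₙ(z)|/(2√n) → (1/1)·Re √(Li₂(z^1)). -/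
theorem sqrt_n_asymptotics_region_1 (K : Set ℂ) (hK : K ⊆ interior R1) (hKc : IsCompact K) :
    TendstoUniformlyOn (fun (n : ℕ) (z : ℂ) => Real.log ‖F n z‖ / (2 * Real.sqrt n))
      (fun z : ℂ => (1 / (1 : ℝ)) * ((dilog (z ^ 1)) ^ (1 / 2 : ℂ)).re) atTop K := by
  have h := main_unif K hK hKc
  refine h.congr_right fun z _ => ?_
  simp [fk]
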